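/- Let K be an algebraically closed field of characteristic 0 or at least 11, and let f ∈ K[X,Z] be a squarefree binary octic with Shioda invariants j_d = J_d(f). Then f is GL₂(K)-equivalent to a form X⁸ + a·X⁴Z⁴ + Z⁸ for some a ∈ K — equivalently, the automorphism group of the genus-3 hyperelliptic curve y² = f(x,1) contains C₂ × D₈ — if and only if the following nine relations hold: 54·j₄³ − 81·j₄²·j₂² − 1080·j₄·j₃²·j₂ + 36·j₄·j₂⁴ − 3600·j₃⁴ + 240·j₃²·j₂³ − 4·j₂⁶ = 0; 60·j₅·j₃ + 18·j₄² − 15·j₄·j₂² − 60·j₃²·j₂ + 2·j₂⁴ = 0; 3·j₅·j₄ − 2·j₅·j₂² + 15·j₄·j₃·j₂ + 60·j₃³ − 2·j₃·j₂³ = 0; 5·j₅² − 6·j₄²·j₂ − 30·j₄·j₃² + j₄·j₂³ = 0; 18·j₆ − 9·j₄·j₂ − 60·j₃² + 2·j₂³ = 0; 3·j₇ − j₅·j₂ + 3·j₄·j₃ = 0; 1260·j₈ − 18·j₄² − 63·j₄·j₂² − 420·j₃²·j₂ + 14·j₂⁴ = 0; 18·j₉ − 2·j₅·j₂² + 15·j₄·j₃·j₂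 + 60·j₃³ − 2·j₃·j₂³ = 0; 630·j₁₀ − 15·j₄²·j₂ − 30·j₄·j₃² + j₄·j₂³ = 0. Moreover, in that case f is GL₂(K)-equivalent to X⁸ + a₄·X⁴Z⁴ + a₀·Z⁸ where a₀ = −a₄²/140 + j₂/2 and a₄ = 35·(j₅·j₂ + 6·j₄·j₃)/(2·j₂³ − 60·j₃²) if 30·j₃² ≠ j₂³, while a₄ = 35·j₅/(3·j₄) if 30·j₃² = j₂³ and j₄ ≠ 0. -/

import Mathlib

open MvPolynomial

/-- Iterated partial derivative in the variable `x` (the variable `0`). -/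
noncomputable def dX {k : Type*} [CommSemiring k] (n : ℕ) (p : MvPolynomial (Fin 2) k) :
    MvPolynomial (Fin 2) k :=
  (fun q => pderiv (0 : Fin 2) q)^[n] p

/-- Iterated partial derivative in the variable `z` (the variable `1`). -/
noncomputable def dZ {k : Type*} [CommSemiring k] (n : ℕ) (p : MvPolynomial (Fin 2) k) :
    MvPolynomial (Fin 2) k :=
  (fun q => pderiv (1 : Fin 2) q)^[n] p

/-- The `h`-th transvectant of two binary forms of degrees `r₁` and `r₂`. -/
noncomputable def transvectant {k : Type*} [Field k] (r₁ r₂ h : ℕ)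
    (f g : MvPolynomial (Fin 2) k) : MvPolynomial (Fin 2) k :=
  C ((((r₁ - h).factorial * (r₂ - h).factorial : ℕ) : k) /
      (((r₁.factorial * r₂.factorial : ℕ)) : k)) *
    ∑ j ∈ Finset.range (h + 1),
      C ((-1 : k) ^ j * (h.choose j : k)) * (dX (h - j) (dZ j f) * dX j (dZ (h - j) g))

section Shioda

variable {k : Type*} [Field k]

/-- The covariant `𝔤 = (f,f)₄` of a binary octic. -/
noncomputable def covG (f : MvPolynomial (Fin 2) k) := transvectant 8 8 4 f f

/-- The covariant `𝔨 = (f,f)₆` of a binary octic. -/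
noncomputable def covK (f : MvPolynomial (Fin 2) k) := transvectant 8 8 6 f f

/-- The covariant `𝔥 = (𝔨,𝔨)₂` of a binary octic. -/
noncomputable def covH (f : MvPolynomial (Fin 2) k) := transvectant 4 4 2 (covK f) (covK f)

/-- The covariant `𝔪 = (f,𝔨)₄` of a binary octic. -/
noncomputable def covM (f : MvPolynomial (Fin 2) k) := transvectant 8 4 4 f (covK f)

/-- The covariant `𝔫 = (f,𝔥)₄` of a binary octic. -/
noncomputable def covN (f : MvPolynomial (Fin 2) k) := transvectant 8 4 4 f (covH f)

/-- The covariant `𝔭 = (𝔤,𝔨)₄` of a binary octic. -/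
noncomputable def covP (f : MvPolynomial (Fin 2) k) := transvectant 8 4 4 (covG f) (covK f)

/-- The covariant `𝔮 = (𝔤,𝔥)₄` of a binary octic. -/
noncomputable def covQ (f : MvPolynomial (Fin 2) k) := transvectant 8 4 4 (covG f) (covH f)

/-- The Shioda invariant `J₂ = (f,f)₈`. -/
noncomputable def shJ2 (f : MvPolynomial (Fin 2) k) : k :=
  constantCoeff (transvectant 8 8 8 f f)

/-- The Shioda invariant `J₃ = (f,𝔤)₈`. -/
noncomputable def shJ3 (f : MvPolynomial (Fin 2) k) : k :=
  constantCoeff (transvectant 8 8 8 f (covG f))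

/-- The Shioda invariant `J₄ = (𝔨,𝔨)₄`. -/
noncomputable def shJ4 (f : MvPolynomial (Fin 2) k) : k :=
  constantCoeff (transvectant 4 4 4 (covK f) (covK f))

/-- The Shioda invariant `J₅ = (𝔪,𝔨)₄`. -/
noncomputable def shJ5 (f : MvPolynomial (Fin 2) k) : k :=
  constantCoeff (transvectant 4 4 4 (covM f) (covK f))

/-- The Shioda invariant `J₆ = (𝔨,𝔥)₄`. -/
noncomputable def shJ6 (f : MvPolynomial (Fin 2) k) : k :=
  constantCoeff (transvectant 4 4 4 (covK f) (covH f))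

/-- The Shioda invariant `J₇ = (𝔪,𝔥)₄`. -/
noncomputable def shJ7 (f : MvPolynomial (Fin 2) k) : k :=
  constantCoeff (transvectant 4 4 4 (covM f) (covH f))

/-- The Shioda invariant `J₈ = (𝔭,𝔥)₄`. -/
noncomputable def shJ8 (f : MvPolynomial (Fin 2) k) : k :=
  constantCoeff (transvectant 4 4 4 (covP f) (covH f))

/-- The Shioda invariant `J₉ = (𝔫,𝔥)₄`. -/
noncomputable def shJ9 (f : MvPolynomial (Fin 2) k) : k :=
  constantCoeff (transvectant 4 4 4 (covN f) (covH f))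

/-- The Shioda invariant `J₁₀ = (𝔮,𝔥)₄`. -/
noncomputable def shJ10 (f : MvPolynomial (Fin 2) k) : k :=
  constantCoeff (transvectant 4 4 4 (covQ f) (covH f))

end Shioda

/-- The nine stratum relations for `C₂ × D₈` among the Shioda invariants. -/
def D8rel {k : Type*} [Field k] (j2 j3 j4 j5 j6 j7 j8 j9 j10 : k) : Prop :=
  54*j4^3 - 81*j4^2*j2^2 - 1080*j4*j3^2*j2 + 36*j4*j2^4 - 3600*j3^4 + 240*j3^2*j2^3
      - 4*j2^6 = 0 ∧
  60*j5*j3 + 18*j4^2 - 15*j4*j2^2 - 60*j3^2*j2 + 2*j2^4 = 0 ∧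
  3*j5*j4 - 2*j5*j2^2 + 15*j4*j3*j2 + 60*j3^3 - 2*j3*j2^3 = 0 ∧
  5*j5^2 - 6*j4^2*j2 - 30*j4*j3^2 + j4*j2^3 = 0 ∧
  18*j6 - 9*j4*j2 - 60*j3^2 + 2*j2^3 = 0 ∧
  3*j7 - j5*j2 + 3*j4*j3 = 0 ∧
  1260*j8 - 18*j4^2 - 63*j4*j2^2 - 420*j3^2*j2 + 14*j2^4 = 0 ∧
  18*j9 - 2*j5*j2^2 + 15*j4*j3*j2 + 60*j3^3 - 2*j3*j2^3 = 0 ∧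
  630*j10 - 15*j4^2*j2 - 30*j4*j3^2 + j4*j2^3 = 0

/-- The generic value of the coefficient `a₄` in the reconstruction of a `C₂ × D₈` octic. -/
noncomputable def a4gen {k : Type*} [Field k] (j2 j3 j4 j5 : k) : k :=
  35 * (j5 * j2 + 6 * j4 * j3) / (2 * j2 ^ 3 - 60 * j3 ^ 2)

/-- The special value of the coefficient `a₄` (used when `30·j₃² = j₂³` and `j₄ ≠ 0`). -/
noncomputable def a4spec {k : Type*} [Field k] (j4 j5 : k) : k := 35 * j5 / (3 * j4)

/-- The coefficient `a₀ = −a₄²/140 + j₂/2`. -/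
noncomputable def a0of {k : Type*} [Field k] (j2 a4 : k) : k := -(a4 ^ 2) / 140 + j2 / 2

/-!
The quartic covariant `𝔨` of an octic satisfying the nine relations has vanishing discriminant, so
after a change of coordinates it is `αX⁴ + βX²Z²` or a nonzero multiple of `X³Z`. If `β ≠ 0`, the
relations force `α = 0` and then the vanishing of every coefficient of `f` off `X⁸, X⁴Z⁴, Z⁸`. A
multiple of `X³Z` would give `f` a double root. If `𝔨 = αX⁴`, the roots of `f` are the vertices of
a cube, or else `f` has a root of multiplicity six.

Conversely the relations hold for `X⁸ + aX⁴Z⁴ + Z⁸` and are homogeneous for the weights of the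
invariants. The reconstruction formulas are correct because, after scaling `Z` so that the
substitution has determinant one, `a₄` and `a₀` are themselves invariants.
-/

namespace BinaryOctic

variable {K : Type*} [Field K]

/-! ### Linear substitutions -/

/-- The substitution of the linear form `M j 0 * X + M j 1 * Z` for the `j`-th variable, that is
the right action of `M` on binary forms. -/
noncomputable def linSubst (M : Matrix (Fin 2) (Fin 2) K) :
    MvPolynomial (Fin 2) K →ₐ[K] MvPolynomial (Fin 2) K :=
  bind₁ fun j => C (M j 0) * X 0 + C (M j 1) * X 1

@[simp]
lemma linSubst_X (M : Matrix (Fin 2) (Fin 2) K) (j : Fin 2) :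
    linSubst M (X j) = C (M j 0) * X 0 + C (M j 1) * X 1 :=
  bind₁_X_right _ j

@[simp]
lemma linSubst_C (M : Matrix (Fin 2) (Fin 2) K) (a : K) : linSubst M (C a) = C a :=
  bind₁_C_right _ a

lemma linSubst_linSubst (M N : Matrix (Fin 2) (Fin 2) K) (p : MvPolynomial (Fin 2) K) :
    linSubst M (linSubst N p) = linSubst (N * M) p := by
  have h : (linSubst M).comp (linSubst N) = linSubst (N * M) := by
    refine algHom_ext fun j => ?_
    simp only [AlgHom.comp_apply, linSubst_X, map_add, map_mul, linSubst_C, Matrix.mul_apply,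
      Fin.sum_univ_two]
    ring
  exact DFunLike.congr_fun h p

@[simp]
lemma linSubst_one (p : MvPolynomial (Fin 2) K) : linSubst 1 p = p := by
  have h : linSubst (1 : Matrix (Fin 2) (Fin 2) K) = AlgHom.id K _ :=
    algHom_ext fun j => by fin_cases j <;> simp [linSubst_X]
  exact DFunLike.congr_fun h p

lemma linSubst_inv_linSubst {M : Matrix (Fin 2) (Fin 2) K} (hM : IsUnit M.det)
    (p : MvPolynomial (Fin 2) K) : linSubst M⁻¹ (linSubst M p) = p := by
  rw [linSubst_linSubst, Matrix.mul_nonsing_inv _ hM, linSubst_one]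

lemma linSubst_linSubst_inv {M : Matrix (Fin 2) (Fin 2) K} (hM : IsUnit M.det)
    (p : MvPolynomial (Fin 2) K) : linSubst M (linSubst M⁻¹ p) = p := by
  rw [linSubst_linSubst, Matrix.nonsing_inv_mul _ hM, linSubst_one]

lemma linSubst_isHomogeneous (M : Matrix (Fin 2) (Fin 2) K) {n : ℕ} {f : MvPolynomial (Fin 2) K}
    (hf : f.IsHomogeneous n) : (linSubst M f).IsHomogeneous n := by
  have hlin (j : Fin 2) : (C (M j 0) * X 0 + C (M j 1) * X 1 :
      MvPolynomial (Fin 2) K).IsHomogeneous 1 :=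
    (isHomogeneous_C_mul_X _ _).add (isHomogeneous_C_mul_X _ _)
  exact one_mul n ▸ hf.aeval _ hlin

lemma squarefree_linSubst {M : Matrix (Fin 2) (Fin 2) K} (hM : IsUnit M.det)
    {f : MvPolynomial (Fin 2) K} (hf : Squarefree f) : Squarefree (linSubst M f) := by
  rintro x ⟨y, hy⟩
  have hsq : f = linSubst M⁻¹ x * linSubst M⁻¹ x * linSubst M⁻¹ y := by
    rw [← map_mul, ← map_mul, ← hy, linSubst_inv_linSubst hM]
  simpa only [linSubst_linSubst_inv hM] using (hf _ ⟨_, hsq⟩).map (linSubst M)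

lemma constantCoeff_linSubst (M : Matrix (Fin 2) (Fin 2) K) (p : MvPolynomial (Fin 2) K) :
    constantCoeff (linSubst M p) = constantCoeff p := by
  have h : constantCoeff.comp (linSubst M).toRingHom = constantCoeff :=
    ringHom_ext (by simp) (by simp)
  exact DFunLike.congr_fun h p

lemma pderiv_linSubst (M : Matrix (Fin 2) (Fin 2) K) (i : Fin 2) (p : MvPolynomial (Fin 2) K) :
    pderiv i (linSubst M p) =
      M 0 i • linSubst M (pderiv 0 p) + M 1 i • linSubst M (pderiv 1 p) := by
  induction p using MvPolynomial.induction_on with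
  | C a => simp
  | add p q hp hq => simp only [map_add, hp, hq, smul_add]; abel
  | mul_X p j hp =>
    simp only [map_mul, map_add, Derivation.leibniz, hp, linSubst_X, smul_eq_mul, smul_eq_C_mul]
    fin_cases i <;> fin_cases j <;> simp [pderiv_X] <;> ring

/-! ### Covariance of the transvectants -/

open scoped TensorProduct

/-- The partial derivative with respect to the `i`-th variable, as a linear endomorphism. -/
noncomputable def pderivEnd (i : Fin 2) : Module.End K (MvPolynomial (Fin 2) K) :=
  (pderiv i).toLinearMap

lemma pderivEnd_apply (i : Fin 2) (p : MvPolynomial (Fin 2) K) : pderivEnd i p = pderiv i p := rfl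

lemma commute_pderivEnd (i j : Fin 2) :
    Commute (pderivEnd i : Module.End K (MvPolynomial (Fin 2) K)) (pderivEnd j) := by
  have h : ⁅(pderiv i : Derivation K (MvPolynomial (Fin 2) K) _), pderiv j⁆ = 0 :=
    derivation_ext fun l => by
      refine (Derivation.commutator_apply ..).trans ?_
      fin_cases i <;> fin_cases j <;> fin_cases l <;> simp [pderiv_X]
  exact LinearMap.ext fun p => sub_eq_zero.1 (DFunLike.congr_fun h p)

lemma dX_eq_pderivEnd_pow (n : ℕ) (p : MvPolynomial (Fin 2) K) : dX n p = (pderivEnd 0 ^ n) p :=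
  (Module.End.pow_apply _ n p).symm

lemma dZ_eq_pderivEnd_pow (n : ℕ) (p : MvPolynomial (Fin 2) K) : dZ n p = (pderivEnd 1 ^ n) p :=
  (Module.End.pow_apply _ n p).symm

/-- Cayley's Ω-process `∂/∂X₁ ∂/∂Z₂ - ∂/∂Z₁ ∂/∂X₂`, acting on pairs of binary forms. -/
noncomputable def cayleyOmega :
    Module.End K (MvPolynomial (Fin 2) K ⊗[K] MvPolynomial (Fin 2) K) :=
  TensorProduct.map (pderivEnd 0) (pderivEnd 1) - TensorProduct.map (pderivEnd 1) (pderivEnd 0)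

lemma cayleyOmega_pow_tmul (h : ℕ) (f g : MvPolynomial (Fin 2) K) :
    (cayleyOmega ^ h) (f ⊗ₜ g) = ∑ j ∈ Finset.range (h + 1),
      ((-1) ^ j * (h.choose j : K)) • (dX (h - j) (dZ j f) ⊗ₜ[K] dX j (dZ (h - j) g)) := by
  let A : Module.End K (MvPolynomial (Fin 2) K ⊗[K] MvPolynomial (Fin 2) K) :=
    TensorProduct.map (pderivEnd 1) (pderivEnd 0)
  let B : Module.End K (MvPolynomial (Fin 2) K ⊗[K] MvPolynomial (Fin 2) K) :=
    TensorProduct.map (pderivEnd 0) (pderivEnd 1)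
  have hcomm : Commute ((-1 : K) • A) B := by
    refine Commute.smul_left ?_ _
    rw [commute_iff_eq, ← TensorProduct.map_mul, ← TensorProduct.map_mul,
      (commute_pderivEnd 1 0).eq]
  have hOmega : cayleyOmega = (-1 : K) • A + B := by
    rw [neg_one_smul K A, neg_add_eq_sub]; rfl
  rw [hOmega, hcomm.add_pow, LinearMap.sum_apply]
  refine Finset.sum_congr rfl fun j _ => ?_
  rw [smul_pow, TensorProduct.map_pow, TensorProduct.map_pow, smul_mul_assoc,
    ← TensorProduct.map_mul, ((commute_pderivEnd 1 0).pow_pow j (h - j)).eq, ← nsmul_eq_mul',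
    ← Nat.cast_smul_eq_nsmul K, smul_smul, mul_comm (Nat.cast _), LinearMap.smul_apply,
    TensorProduct.map_tmul]
  simp only [dX_eq_pderivEnd_pow, dZ_eq_pderivEnd_pow, Module.End.mul_apply]

lemma cayleyOmega_map_linSubst (M : Matrix (Fin 2) (Fin 2) K)
    (t : MvPolynomial (Fin 2) K ⊗[K] MvPolynomial (Fin 2) K) :
    cayleyOmega (TensorProduct.map (linSubst M).toLinearMap (linSubst M).toLinearMap t) =
      M.det • TensorProduct.map (linSubst M).toLinearMap (linSubst M).toLinearMap
        (cayleyOmega t) := by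
  induction t with
  | zero => simp
  | add s t hs ht => simp only [map_add, hs, ht, smul_add]
  | tmul f g =>
    simp only [cayleyOmega, pderivEnd_apply, LinearMap.sub_apply, TensorProduct.map_tmul, map_sub,
      AlgHom.toLinearMap_apply, pderiv_linSubst, TensorProduct.add_tmul, TensorProduct.tmul_add,
      TensorProduct.smul_tmul, TensorProduct.tmul_smul, Matrix.det_fin_two]
    module

lemma cayleyOmega_pow_map_linSubst (M : Matrix (Fin 2) (Fin 2) K) (h : ℕ)
    (t : MvPolynomial (Fin 2) K ⊗[K] MvPolynomial (Fin 2) K) :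
    (cayleyOmega ^ h) (TensorProduct.map (linSubst M).toLinearMap (linSubst M).toLinearMap t) =
      M.det ^ h • TensorProduct.map (linSubst M).toLinearMap (linSubst M).toLinearMap
        ((cayleyOmega ^ h) t) := by
  induction h with
  | zero => simp
  | succ h ih =>
    rw [pow_succ', Module.End.mul_apply, ih, map_smul, cayleyOmega_map_linSubst, smul_smul,
      ← pow_succ, Module.End.mul_apply]

/-- The constant by which the transvectant is normalised. -/
noncomputable def transvectantScale (K : Type*) [Field K] (r₁ r₂ h : ℕ) : K :=
  (((r₁ - h).factorial * (r₂ - h).factorial : ℕ) : K) / ((r₁.factorial * r₂.factorial : ℕ) : K)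

lemma transvectant_eq_cayleyOmega (r₁ r₂ h : ℕ) (f g : MvPolynomial (Fin 2) K) :
    transvectant r₁ r₂ h f g =
      transvectantScale K r₁ r₂ h • LinearMap.mul' K _ ((cayleyOmega ^ h) (f ⊗ₜ g)) := by
  simp only [cayleyOmega_pow_tmul, map_sum, map_smul, LinearMap.mul'_apply, smul_eq_C_mul]
  rfl

lemma transvectant_smul_smul (r₁ r₂ h : ℕ) (a b : K) (f g : MvPolynomial (Fin 2) K) :
    transvectant r₁ r₂ h (a • f) (b • g) = (a * b) • transvectant r₁ r₂ h f g := by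
  simp only [transvectant_eq_cayleyOmega, TensorProduct.smul_tmul_smul, map_smul]
  rw [smul_comm]

lemma transvectant_linSubst (M : Matrix (Fin 2) (Fin 2) K) (r₁ r₂ h : ℕ)
    (f g : MvPolynomial (Fin 2) K) :
    transvectant r₁ r₂ h (linSubst M f) (linSubst M g) =
      M.det ^ h • linSubst M (transvectant r₁ r₂ h f g) := by
  have hmul (t : MvPolynomial (Fin 2) K ⊗[K] MvPolynomial (Fin 2) K) :
      LinearMap.mul' K _ (TensorProduct.map (linSubst M).toLinearMap (linSubst M).toLinearMap t) =
        linSubst M (LinearMap.mul' K _ t) := by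
    induction t with
    | zero => simp
    | add s t hs ht => simp only [map_add, hs, ht]
    | tmul f g => simp
  simp only [transvectant_eq_cayleyOmega]
  rw [show linSubst M f ⊗ₜ[K] linSubst M g =
      TensorProduct.map (linSubst M).toLinearMap (linSubst M).toLinearMap (f ⊗ₜ g) from rfl,
    cayleyOmega_pow_map_linSubst, map_smul, hmul, map_smul, smul_comm]

/-- A map between binary forms is a covariant of weight `w` if it commutes with linear
substitutions up to the `w`-th power of the determinant. -/
def IsCovariant (w : ℕ) (Φ : MvPolynomial (Fin 2) K → MvPolynomial (Fin 2) K) : Prop :=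
  ∀ M f, Φ (linSubst M f) = M.det ^ w • linSubst M (Φ f)

lemma isCovariant_id : IsCovariant 0 (fun f : MvPolynomial (Fin 2) K => f) := fun M f => by simp

lemma IsCovariant.transvectant {v w : ℕ} {Φ Ψ : MvPolynomial (Fin 2) K → MvPolynomial (Fin 2) K}
    (hΦ : IsCovariant v Φ) (hΨ : IsCovariant w Ψ) (r₁ r₂ h : ℕ) :
    IsCovariant (v + w + h) fun f => transvectant r₁ r₂ h (Φ f) (Ψ f) := fun M f => by
  simp only [hΦ M f, hΨ M f, transvectant_smul_smul, transvectant_linSubst, smul_smul, pow_add]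

lemma IsCovariant.constantCoeff_linSubst {w : ℕ}
    {Φ : MvPolynomial (Fin 2) K → MvPolynomial (Fin 2) K} (hΦ : IsCovariant w Φ)
    (M : Matrix (Fin 2) (Fin 2) K) (f : MvPolynomial (Fin 2) K) :
    constantCoeff (Φ (linSubst M f)) = M.det ^ w * constantCoeff (Φ f) := by
  rw [hΦ M f, constantCoeff_smul, smul_eq_mul, BinaryOctic.constantCoeff_linSubst]

lemma isCovariant_covG : IsCovariant 4 (covG (k := K)) :=
  isCovariant_id.transvectant isCovariant_id 8 8 4

lemma isCovariant_covK : IsCovariant 6 (covK (k := K)) :=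
  isCovariant_id.transvectant isCovariant_id 8 8 6

lemma isCovariant_covH : IsCovariant 14 (covH (k := K)) :=
  isCovariant_covK.transvectant isCovariant_covK 4 4 2

lemma isCovariant_covM : IsCovariant 10 (covM (k := K)) :=
  isCovariant_id.transvectant isCovariant_covK 8 4 4

lemma isCovariant_covN : IsCovariant 18 (covN (k := K)) :=
  isCovariant_id.transvectant isCovariant_covH 8 4 4

lemma isCovariant_covP : IsCovariant 14 (covP (k := K)) :=
  isCovariant_covG.transvectant isCovariant_covK 8 4 4

lemma isCovariant_covQ : IsCovariant 22 (covQ (k := K)) :=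
  isCovariant_covG.transvectant isCovariant_covH 8 4 4

lemma shJ2_linSubst (M : Matrix (Fin 2) (Fin 2) K) (f : MvPolynomial (Fin 2) K) :
    shJ2 (linSubst M f) = M.det ^ 8 * shJ2 f :=
  (isCovariant_id.transvectant isCovariant_id 8 8 8).constantCoeff_linSubst M f

lemma shJ3_linSubst (M : Matrix (Fin 2) (Fin 2) K) (f : MvPolynomial (Fin 2) K) :
    shJ3 (linSubst M f) = M.det ^ 12 * shJ3 f :=
  (isCovariant_id.transvectant isCovariant_covG 8 8 8).constantCoeff_linSubst M f

lemma shJ4_linSubst (M : Matrix (Fin 2) (Fin 2) K) (f : MvPolynomial (Fin 2) K) :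
    shJ4 (linSubst M f) = M.det ^ 16 * shJ4 f :=
  (isCovariant_covK.transvectant isCovariant_covK 4 4 4).constantCoeff_linSubst M f

lemma shJ5_linSubst (M : Matrix (Fin 2) (Fin 2) K) (f : MvPolynomial (Fin 2) K) :
    shJ5 (linSubst M f) = M.det ^ 20 * shJ5 f :=
  (isCovariant_covM.transvectant isCovariant_covK 4 4 4).constantCoeff_linSubst M f

lemma shJ6_linSubst (M : Matrix (Fin 2) (Fin 2) K) (f : MvPolynomial (Fin 2) K) :
    shJ6 (linSubst M f) = M.det ^ 24 * shJ6 f :=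
  (isCovariant_covK.transvectant isCovariant_covH 4 4 4).constantCoeff_linSubst M f

lemma shJ7_linSubst (M : Matrix (Fin 2) (Fin 2) K) (f : MvPolynomial (Fin 2) K) :
    shJ7 (linSubst M f) = M.det ^ 28 * shJ7 f :=
  (isCovariant_covM.transvectant isCovariant_covH 4 4 4).constantCoeff_linSubst M f

lemma shJ8_linSubst (M : Matrix (Fin 2) (Fin 2) K) (f : MvPolynomial (Fin 2) K) :
    shJ8 (linSubst M f) = M.det ^ 32 * shJ8 f :=
  (isCovariant_covP.transvectant isCovariant_covH 4 4 4).constantCoeff_linSubst M f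

lemma shJ9_linSubst (M : Matrix (Fin 2) (Fin 2) K) (f : MvPolynomial (Fin 2) K) :
    shJ9 (linSubst M f) = M.det ^ 36 * shJ9 f :=
  (isCovariant_covN.transvectant isCovariant_covH 4 4 4).constantCoeff_linSubst M f

lemma shJ10_linSubst (M : Matrix (Fin 2) (Fin 2) K) (f : MvPolynomial (Fin 2) K) :
    shJ10 (linSubst M f) = M.det ^ 40 * shJ10 f :=
  (isCovariant_covQ.transvectant isCovariant_covH 4 4 4).constantCoeff_linSubst M f

/-- The nine relations between the Shioda invariants of the binary octic `f` that cut out the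
stratum of curves with automorphism group containing `C₂ × D₈`. -/
def SatisfiesD8Relations (f : MvPolynomial (Fin 2) K) : Prop :=
  D8rel (shJ2 f) (shJ3 f) (shJ4 f) (shJ5 f) (shJ6 f) (shJ7 f) (shJ8 f) (shJ9 f) (shJ10 f)

lemma SatisfiesD8Relations.linSubst {f : MvPolynomial (Fin 2) K} (hf : SatisfiesD8Relations f)
    (M : Matrix (Fin 2) (Fin 2) K) : SatisfiesD8Relations (linSubst M f) := by
  obtain ⟨h1, h2, h3, h4, h5, h6, h7, h8, h9⟩ := hf
  simp only [SatisfiesD8Relations, D8rel, shJ2_linSubst, shJ3_linSubst, shJ4_linSubst,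
    shJ5_linSubst, shJ6_linSubst, shJ7_linSubst, shJ8_linSubst, shJ9_linSubst, shJ10_linSubst]
  refine ⟨?_, ?_, ?_, ?_, ?_, ?_, ?_, ?_, ?_⟩
  · linear_combination M.det ^ 48 * h1
  · linear_combination M.det ^ 32 * h2
  · linear_combination M.det ^ 36 * h3
  · linear_combination M.det ^ 40 * h4
  · linear_combination M.det ^ 24 * h5
  · linear_combination M.det ^ 28 * h6
  · linear_combination M.det ^ 32 * h7
  · linear_combination M.det ^ 36 * h8
  · linear_combination M.det ^ 40 * h9

/-! ### Binary forms with binomial coefficients -/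

/-- The binary form `∑ i, (n choose i) * c i * X ^ (n - i) * Z ^ i`. Coefficients are indexed by `ℕ`
so that differentiation becomes a shift; those beyond `n` are irrelevant. -/
noncomputable def binaryForm (n : ℕ) (c : ℕ → K) : MvPolynomial (Fin 2) K :=
  ∑ i ∈ Finset.range (n + 1), C (n.choose i * c i) * (X 0 ^ (n - i) * X 1 ^ i)

lemma pderiv_zero_C_mul_X_pow_mul (a : K) (p q : ℕ) :
    pderiv (0 : Fin 2) (C a * (X 0 ^ p * X 1 ^ q)) = C (a * p) * (X 0 ^ (p - 1) * X 1 ^ q) := by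
  rw [pderiv_C_mul, pderiv_mul, pderiv_pow, pderiv_pow, pderiv_X_self, pderiv_X_of_ne one_ne_zero,
    map_mul, map_natCast]
  ring

lemma pderiv_one_C_mul_X_pow_mul (a : K) (p q : ℕ) :
    pderiv (1 : Fin 2) (C a * (X 0 ^ p * X 1 ^ q)) = C (a * q) * (X 0 ^ p * X 1 ^ (q - 1)) := by
  rw [pderiv_C_mul, pderiv_mul, pderiv_pow, pderiv_pow, pderiv_X_self, pderiv_X_of_ne zero_ne_one,
    map_mul, map_natCast]
  ring

lemma pderiv_zero_binaryForm (n : ℕ) (c : ℕ → K) :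
    pderiv 0 (binaryForm (n + 1) c) = ((n + 1 : ℕ) : K) • binaryForm n c := by
  simp only [binaryForm, map_sum, pderiv_zero_C_mul_X_pow_mul, Finset.smul_sum, smul_eq_C_mul]
  rw [Finset.sum_range_succ, Nat.sub_self, Nat.cast_zero, mul_zero, C_0, zero_mul, add_zero]
  refine Finset.sum_congr rfl fun i hi => ?_
  have hin : i ≤ n := Finset.mem_range_succ_iff.1 hi
  have hchoose : (n.choose i : K) * (n + 1 : ℕ) = ((n + 1).choose i : K) * (n + 1 - i : ℕ) :=
    by rw [← Nat.cast_mul, ← Nat.cast_mul, Nat.choose_mul_succ_eq]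
  rw [← mul_assoc (C ((n + 1 : ℕ) : K)), ← C_mul, show n + 1 - i - 1 = n - i by omega]
  congr 2
  linear_combination -c i * hchoose

lemma pderiv_one_binaryForm (n : ℕ) (c : ℕ → K) :
    pderiv 1 (binaryForm (n + 1) c) = ((n + 1 : ℕ) : K) • binaryForm n fun i => c (i + 1) := by
  simp only [binaryForm, map_sum, pderiv_one_C_mul_X_pow_mul, Finset.smul_sum, smul_eq_C_mul]
  rw [Finset.sum_range_succ', Nat.cast_zero, mul_zero, C_0, zero_mul, add_zero]
  refine Finset.sum_congr rfl fun i _ => ?_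
  have hchoose : ((n + 1 : ℕ) : K) * n.choose i = ((n + 1).choose (i + 1) : K) * (i + 1 : ℕ) :=
    by rw [← Nat.cast_mul, ← Nat.cast_mul, Nat.add_one_mul_choose_eq]
  rw [← mul_assoc (C ((n + 1 : ℕ) : K)), ← C_mul, Nat.add_sub_cancel, Nat.add_sub_add_right]
  congr 2
  linear_combination -c (i + 1) * hchoose

lemma dX_smul (n : ℕ) (a : K) (p : MvPolynomial (Fin 2) K) : dX n (a • p) = a • dX n p := by
  simp only [dX_eq_pderivEnd_pow, map_smul]

lemma dZ_smul (n : ℕ) (a : K) (p : MvPolynomial (Fin 2) K) : dZ n (a • p) = a • dZ n p := by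
  simp only [dZ_eq_pderivEnd_pow, map_smul]

lemma dX_binaryForm (m a : ℕ) (c : ℕ → K) :
    dX a (binaryForm (m + a) c) = ((m + a).descFactorial a : K) • binaryForm m c := by
  induction a with
  | zero => simp [dX]
  | succ a ih =>
    rw [show dX (a + 1) _ = dX a (pderiv 0 _) from rfl, ← add_assoc, pderiv_zero_binaryForm,
      dX_smul, ih, smul_smul, Nat.succ_descFactorial_succ, Nat.cast_mul]

lemma dZ_binaryForm (m b : ℕ) (c : ℕ → K) :
    dZ b (binaryForm (m + b) c) =
      ((m + b).descFactorial b : K) • binaryForm m fun i => c (i + b) := by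
  induction b generalizing c with
  | zero => simp [dZ]
  | succ b ih =>
    rw [show dZ (b + 1) _ = dZ b (pderiv 1 _) from rfl, ← add_assoc, pderiv_one_binaryForm,
      dZ_smul, ih, smul_smul, Nat.succ_descFactorial_succ, Nat.cast_mul]
    simp only [add_assoc]

lemma dX_dZ_binaryForm (m a b : ℕ) (c : ℕ → K) :
    dX a (dZ b (binaryForm (m + (a + b)) c)) =
      ((m + (a + b)).descFactorial (a + b) : K) • binaryForm m fun i => c (i + b) := by
  have hdesc := Nat.descFactorial_mul_descFactorial (n := m + (a + b)) (Nat.le_add_left b a)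
  rw [← add_assoc, dZ_binaryForm, dX_smul, dX_binaryForm, smul_smul, ← Nat.cast_mul, mul_comm]
  rw [← add_assoc, Nat.add_sub_cancel, Nat.add_sub_cancel] at hdesc
  rw [hdesc]

lemma transvectant_binaryForm (m n h : ℕ) (hm : ((m + h).factorial : K) ≠ 0)
    (hn : ((n + h).factorial : K) ≠ 0) (c d : ℕ → K) :
    transvectant (m + h) (n + h) h (binaryForm (m + h) c) (binaryForm (n + h) d) =
      ∑ j ∈ Finset.range (h + 1), C ((-1) ^ j * (h.choose j : K)) *
        ((binaryForm m fun i => c (i + j)) * binaryForm n fun i => d (i + (h - j))) := by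
  have hfact (r : ℕ) : ((r + h).factorial : K) = r.factorial * (r + h).descFactorial h := by
    rw [← Nat.cast_mul, ← Nat.factorial_mul_descFactorial (Nat.le_add_left h r),
      Nat.add_sub_cancel]
  have hscale : (((m.factorial * n.factorial : ℕ) : K) /
      ((m + h).factorial * (n + h).factorial : ℕ)) *
        ((m + h).descFactorial h * (n + h).descFactorial h) = 1 := by
    rw [div_mul_eq_mul_div, div_eq_one_iff_eq (by push_cast; exact mul_ne_zero hm hn)]
    push_cast
    rw [hfact m, hfact n]
    ring
  rw [transvectant, Nat.add_sub_cancel, Nat.add_sub_cancel, Finset.mul_sum]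
  refine Finset.sum_congr rfl fun j hj => ?_
  obtain ⟨i, rfl⟩ := Nat.exists_eq_add_of_le' (Finset.mem_range_succ_iff.1 hj)
  rw [Nat.add_sub_cancel, dX_dZ_binaryForm, add_comm i j, dX_dZ_binaryForm, smul_mul_smul_comm,
    mul_smul_comm, ← smul_eq_C_mul, smul_smul, add_comm j i, hscale, one_smul]

lemma binaryForm_isHomogeneous (n : ℕ) (c : ℕ → K) : (binaryForm n c).IsHomogeneous n := by
  refine IsHomogeneous.sum _ _ _ fun i hi => ?_
  rw [X_pow_eq_monomial, X_pow_eq_monomial, monomial_mul, C_mul_monomial]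
  refine isHomogeneous_monomial _ ?_
  rw [map_add, Finsupp.degree_single, Finsupp.degree_single]
  have := Finset.mem_range.1 hi
  lia

lemma coeff_binaryForm {n i : ℕ} (hi : i ≤ n) (c : ℕ → K) :
    coeff (Finsupp.single 0 (n - i) + Finsupp.single 1 i) (binaryForm n c) =
      n.choose i * c i := by
  simp only [binaryForm, coeff_sum, coeff_C_mul, X_pow_eq_monomial, monomial_mul, coeff_monomial]
  rw [Finset.sum_eq_single i]
  · simp
  · intro j _ hji
    rw [if_neg fun h => hji (by simpa using DFunLike.congr_fun h 1), mul_zero]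
  · exact fun h => absurd (Finset.mem_range_succ_iff.2 hi) h

lemma choose_cast_ne_zero {n i : ℕ} (hn : (n.factorial : K) ≠ 0) (hi : i ≤ n) :
    (n.choose i : K) ≠ 0 := fun h => hn <| by
  rw [← Nat.choose_mul_factorial_mul_factorial hi, Nat.cast_mul, Nat.cast_mul, h, zero_mul,
    zero_mul]

lemma binaryForm_injOn {n : ℕ} (hn : (n.factorial : K) ≠ 0) {c d : ℕ → K}
    (h : binaryForm n c = binaryForm n d) {i : ℕ} (hi : i ≤ n) : c i = d i := by
  refine mul_left_cancel₀ (choose_cast_ne_zero hn hi) ?_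
  rw [← coeff_binaryForm hi, h, coeff_binaryForm hi]

lemma exists_eq_binaryForm {n : ℕ} (hn : (n.factorial : K) ≠ 0) {f : MvPolynomial (Fin 2) K}
    (hf : f.IsHomogeneous n) : ∃ c, f = binaryForm n c := by
  refine ⟨fun i => coeff (Finsupp.single 0 (n - i) + Finsupp.single 1 i) f / n.choose i, ?_⟩
  ext m
  by_cases hm : m.degree = n
  · have hsum : m 0 + m 1 = n := by rw [← hm, Finsupp.degree_eq_sum, Fin.sum_univ_two]
    have hi : m 1 ≤ n := by lia
    have hexp : m = Finsupp.single 0 (n - m 1) + Finsupp.single 1 (m 1) := by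
      ext j
      fin_cases j <;> simp [← hsum]
    rw [hexp, coeff_binaryForm (by simpa using hi)]
    simp [mul_div_cancel₀ _ (choose_cast_ne_zero hn hi)]
  · rw [hf.coeff_eq_zero hm, (binaryForm_isHomogeneous n _).coeff_eq_zero hm]

/-- The characteristic of `K` is zero or exceeds `7`: the primes dividing `8!` are invertible. -/
structure CharGtSeven (K : Type*) [Field K] : Prop where
  two_ne_zero : (2 : K) ≠ 0
  three_ne_zero : (3 : K) ≠ 0
  five_ne_zero : (5 : K) ≠ 0
  seven_ne_zero : (7 : K) ≠ 0

lemma charGtSeven_of_ringChar (h : ringChar K = 0 ∨ 11 ≤ ringChar K) : CharGtSeven K := by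
  have hcast (n : ℕ) (hpos : 0 < n) (hlt : n < 11) : (n : K) ≠ 0 := fun hn => by
    have hdvd := (ringChar.spec K n).1 hn
    rcases h with h | h
    · rw [h, zero_dvd_iff] at hdvd; lia
    · have := Nat.le_of_dvd hpos hdvd; lia
  exact ⟨mod_cast hcast 2 (by lia) (by lia), mod_cast hcast 3 (by lia) (by lia),
    mod_cast hcast 5 (by lia) (by lia), mod_cast hcast 7 (by lia) (by lia)⟩

namespace CharGtSeven

variable (H : CharGtSeven K)
include H

lemma thirtyfive_ne_zero : (35 : K) ≠ 0 := by
  rw [show (35 : K) = 5 * 7 by norm_num]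
  exact mul_ne_zero H.five_ne_zero H.seven_ne_zero

lemma seventy_ne_zero : (70 : K) ≠ 0 := by
  rw [show (70 : K) = 2 * 35 by norm_num]
  exact mul_ne_zero H.two_ne_zero H.thirtyfive_ne_zero

lemma factorial_four_ne_zero : ((Nat.factorial 4 : ℕ) : K) ≠ 0 := by
  rw [show ((Nat.factorial 4 : ℕ) : K) = 2 ^ 3 * 3 by norm_num [Nat.factorial]]
  exact mul_ne_zero (pow_ne_zero _ H.two_ne_zero) H.three_ne_zero

lemma factorial_eight_ne_zero : ((Nat.factorial 8 : ℕ) : K) ≠ 0 := by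
  rw [show ((Nat.factorial 8 : ℕ) : K) = 2 ^ 6 * 3 ^ 2 * 70 by norm_num [Nat.factorial]]
  exact mul_ne_zero (mul_ne_zero (pow_ne_zero _ H.two_ne_zero) (pow_ne_zero _ H.three_ne_zero))
    H.seventy_ne_zero

end CharGtSeven

/-! ### Covariants in coordinates -/

lemma binaryForm_zero (c : ℕ → K) : binaryForm 0 c = C (c 0) := by
  simp [binaryForm]

lemma binaryForm_two (c : ℕ → K) : binaryForm 2 c =
    C (c 0) * X 0 ^ 2 + 2 * C (c 1) * (X 0 * X 1) + C (c 2) * X 1 ^ 2 := by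
  simp [binaryForm, Finset.sum_range_succ]

lemma binaryForm_four (c : ℕ → K) : binaryForm 4 c =
    C (c 0) * X 0 ^ 4 + 4 * C (c 1) * (X 0 ^ 3 * X 1) + 6 * C (c 2) * (X 0 ^ 2 * X 1 ^ 2) +
      4 * C (c 3) * (X 0 * X 1 ^ 3) + C (c 4) * X 1 ^ 4 := by
  simp [binaryForm, Finset.sum_range_succ, Nat.choose]

lemma binaryForm_eight (c : ℕ → K) : binaryForm 8 c =
    C (c 0) * X 0 ^ 8 + 8 * C (c 1) * (X 0 ^ 7 * X 1) + 28 * C (c 2) * (X 0 ^ 6 * X 1 ^ 2) +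
      56 * C (c 3) * (X 0 ^ 5 * X 1 ^ 3) + 70 * C (c 4) * (X 0 ^ 4 * X 1 ^ 4) +
      56 * C (c 5) * (X 0 ^ 3 * X 1 ^ 5) + 28 * C (c 6) * (X 0 ^ 2 * X 1 ^ 6) +
      8 * C (c 7) * (X 0 * X 1 ^ 7) + C (c 8) * X 1 ^ 8 := by
  simp [binaryForm, Finset.sum_range_succ, Nat.choose]

lemma C_div_ofNat_mul {σ : Type*} (a : K) (n : ℕ) [n.AtLeastTwo] (hn : (ofNat(n) : K) ≠ 0) :
    (C (a / ofNat(n)) * ofNat(n) : MvPolynomial σ K) = C a := by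
  rw [← map_ofNat (C : K →+* MvPolynomial σ K) n, ← C_mul, div_mul_cancel₀ _ hn]

/-- The coefficients of the quartic covariant `𝔨 = (f,f)₆` of the octic with coefficients `c`. -/
noncomputable def covKCoeff (c : ℕ → K) : ℕ → K
  | 0 => 2 * (c 0 * c 6 - 6 * c 1 * c 5 + 15 * c 2 * c 4 - 10 * c 3 ^ 2)
  | 1 => c 0 * c 7 - 5 * c 1 * c 6 + 9 * c 2 * c 5 - 5 * c 3 * c 4
  | 2 => (c 0 * c 8 - 2 * c 1 * c 7 - 8 * c 2 * c 6 + 34 * c 3 * c 5 - 25 * c 4 ^ 2) / 3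
  | 3 => c 1 * c 8 - 5 * c 2 * c 7 + 9 * c 3 * c 6 - 5 * c 4 * c 5
  | 4 => 2 * (c 2 * c 8 - 6 * c 3 * c 7 + 15 * c 4 * c 6 - 10 * c 5 ^ 2)
  | _ => 0

lemma covK_binaryForm (H : CharGtSeven K) (c : ℕ → K) :
    covK (binaryForm 8 c) = binaryForm 4 (covKCoeff c) := by
  have h3 := C_div_ofNat_mul (σ := Fin 2)
    (c 0 * c 8 - 2 * c 1 * c 7 - 8 * c 2 * c 6 + 34 * c 3 * c 5 - 25 * c 4 ^ 2) 3 H.three_ne_zero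
  rw [covK, transvectant_binaryForm 2 2 6 H.factorial_eight_ne_zero H.factorial_eight_ne_zero,
    binaryForm_four]
  simp only [covKCoeff, Finset.sum_range_succ, Finset.sum_range_zero, binaryForm_two, map_add,
    map_sub, map_mul, map_pow, map_neg, map_one, map_ofNat, map_natCast] at h3 ⊢
  norm_num [Nat.choose] at h3 ⊢
  linear_combination (-2 * X 0 ^ 2 * X 1 ^ 2) * h3

/-- The coefficients of the octic covariant `𝔤 = (f,f)₄` of the octic with coefficients `c`. -/
noncomputable def covGCoeff (c : ℕ → K) : ℕ → K
  | 0 => 2 * c 0 * c 4 - 8 * c 1 * c 3 + 6 * c 2 ^ 2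
  | 1 => c 0 * c 5 - 3 * c 1 * c 4 + 2 * c 2 * c 3
  | 2 => (3 * c 0 * c 6 - 4 * c 1 * c 5 - 11 * c 2 * c 4 + 12 * c 3 ^ 2) / 7
  | 3 => (c 0 * c 7 + 2 * c 1 * c 6 - 12 * c 2 * c 5 + 9 * c 3 * c 4) / 7
  | 4 => (c 0 * c 8 + 12 * c 1 * c 7 - 22 * c 2 * c 6 - 36 * c 3 * c 5 + 45 * c 4 ^ 2) / 35
  | 5 => (c 1 * c 8 + 2 * c 2 * c 7 - 12 * c 3 * c 6 + 9 * c 4 * c 5) / 7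
  | 6 => (3 * c 2 * c 8 - 4 * c 3 * c 7 - 11 * c 4 * c 6 + 12 * c 5 ^ 2) / 7
  | 7 => c 3 * c 8 - 3 * c 4 * c 7 + 2 * c 5 * c 6
  | 8 => 2 * c 4 * c 8 - 8 * c 5 * c 7 + 6 * c 6 ^ 2
  | _ => 0

lemma covG_binaryForm (H : CharGtSeven K) (c : ℕ → K) :
    covG (binaryForm 8 c) = binaryForm 8 (covGCoeff c) := by
  have h7 (a : K) := C_div_ofNat_mul (σ := Fin 2) a 7 H.seven_ne_zero
  have h2 := h7 (3 * c 0 * c 6 - 4 * c 1 * c 5 - 11 * c 2 * c 4 + 12 * c 3 ^ 2)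
  have h3 := h7 (c 0 * c 7 + 2 * c 1 * c 6 - 12 * c 2 * c 5 + 9 * c 3 * c 4)
  have h4 := C_div_ofNat_mul (σ := Fin 2) (c 0 * c 8 + 12 * c 1 * c 7 - 22 * c 2 * c 6 -
    36 * c 3 * c 5 + 45 * c 4 ^ 2) 35 H.thirtyfive_ne_zero
  have h5 := h7 (c 1 * c 8 + 2 * c 2 * c 7 - 12 * c 3 * c 6 + 9 * c 4 * c 5)
  have h6 := h7 (3 * c 2 * c 8 - 4 * c 3 * c 7 - 11 * c 4 * c 6 + 12 * c 5 ^ 2)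
  rw [covG, transvectant_binaryForm 4 4 4 H.factorial_eight_ne_zero H.factorial_eight_ne_zero,
    binaryForm_eight]
  simp only [covGCoeff, Finset.sum_range_succ, Finset.sum_range_zero, binaryForm_four, map_add,
    map_sub, map_mul, map_pow, map_neg, map_one, map_ofNat, map_natCast] at h2 h3 h4 h5 h6 ⊢
  norm_num [Nat.choose] at h2 h3 h4 h5 h6 ⊢
  linear_combination (-4 * X 0 ^ 6 * X 1 ^ 2) * h2 + (-8 * X 0 ^ 5 * X 1 ^ 3) * h3 +
    (-2 * X 0 ^ 4 * X 1 ^ 4) * h4 + (-8 * X 0 ^ 3 * X 1 ^ 5) * h5 + (-4 * X 0 ^ 2 * X 1 ^ 6) * h6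

/-- The coefficients of `(q,q)₂`, the Hessian up to a scalar, for the quartic `q` with
coefficients `k`. -/
noncomputable def hessianCoeff (k : ℕ → K) : ℕ → K
  | 0 => 2 * (k 0 * k 2 - k 1 ^ 2)
  | 1 => k 0 * k 3 - k 1 * k 2
  | 2 => (k 0 * k 4 + 2 * k 1 * k 3 - 3 * k 2 ^ 2) / 3
  | 3 => k 1 * k 4 - k 2 * k 3
  | 4 => 2 * (k 2 * k 4 - k 3 ^ 2)
  | _ => 0

lemma transvectant_four_four_two (H : CharGtSeven K) (k : ℕ → K) :
    transvectant 4 4 2 (binaryForm 4 k) (binaryForm 4 k) = binaryForm 4 (hessianCoeff k) := by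
  have h3 := C_div_ofNat_mul (σ := Fin 2) (k 0 * k 4 + 2 * k 1 * k 3 - 3 * k 2 ^ 2) 3
    H.three_ne_zero
  rw [transvectant_binaryForm 2 2 2 H.factorial_four_ne_zero H.factorial_four_ne_zero,
    binaryForm_four]
  simp only [hessianCoeff, Finset.sum_range_succ, Finset.sum_range_zero, binaryForm_two, map_add,
    map_sub, map_mul, map_pow, map_neg, map_one, map_ofNat, map_natCast] at h3 ⊢
  norm_num [Nat.choose] at h3 ⊢
  linear_combination (-2 * X 0 ^ 2 * X 1 ^ 2) * h3

lemma covH_binaryForm (H : CharGtSeven K) (c : ℕ → K) :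
    covH (binaryForm 8 c) = binaryForm 4 (hessianCoeff (covKCoeff c)) := by
  rw [covH, covK_binaryForm H, transvectant_four_four_two H]

/-- The coefficients of the quartic `(f,q)₄`, for the octic `f` with coefficients `c` and the
quartic `q` with coefficients `k`. -/
def contractCoeff (c k : ℕ → K) (i : ℕ) : K :=
  c i * k 4 - 4 * c (i + 1) * k 3 + 6 * c (i + 2) * k 2 - 4 * c (i + 3) * k 1 + c (i + 4) * k 0

lemma transvectant_eight_four_four (H : CharGtSeven K) (c k : ℕ → K) :
    transvectant 8 4 4 (binaryForm 8 c) (binaryForm 4 k) =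
      binaryForm 4 (contractCoeff c k) := by
  rw [transvectant_binaryForm 4 0 4 H.factorial_eight_ne_zero H.factorial_four_ne_zero,
    binaryForm_four]
  simp only [contractCoeff, Finset.sum_range_succ, Finset.sum_range_zero, binaryForm_zero,
    binaryForm_four, map_add, map_sub, map_mul, map_pow, map_neg, map_one, map_ofNat, map_natCast]
  norm_num [Nat.choose]
  ring

/-- The joint invariant `(p,q)₄` of the binary quartics with coefficients `a` and `b`. -/
def quarticPairing (a b : ℕ → K) : K :=
  a 0 * b 4 - 4 * a 1 * b 3 + 6 * a 2 * b 2 - 4 * a 3 * b 1 + a 4 * b 0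

lemma transvectant_four_four_four (H : CharGtSeven K) (a b : ℕ → K) :
    constantCoeff (transvectant 4 4 4 (binaryForm 4 a) (binaryForm 4 b)) =
      quarticPairing a b := by
  rw [transvectant_binaryForm 0 0 4 H.factorial_four_ne_zero H.factorial_four_ne_zero]
  simp only [quarticPairing, Finset.sum_range_succ, Finset.sum_range_zero, binaryForm_zero,
    map_add, map_mul, constantCoeff_C]
  norm_num [Nat.choose]
  ring

/-- The joint invariant `(p,q)₈` of the binary octics with coefficients `a` and `b`. -/
def octicPairing (a b : ℕ → K) : K :=
  a 0 * b 8 - 8 * a 1 * b 7 + 28 * a 2 * b 6 - 56 * a 3 * b 5 + 70 * a 4 * b 4 - 56 * a 5 * b 3 +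
    28 * a 6 * b 2 - 8 * a 7 * b 1 + a 8 * b 0

lemma transvectant_eight_eight_eight (H : CharGtSeven K) (a b : ℕ → K) :
    constantCoeff (transvectant 8 8 8 (binaryForm 8 a) (binaryForm 8 b)) = octicPairing a b := by
  rw [transvectant_binaryForm 0 0 8 H.factorial_eight_ne_zero H.factorial_eight_ne_zero]
  simp only [octicPairing, Finset.sum_range_succ, Finset.sum_range_zero, binaryForm_zero,
    map_add, map_mul, constantCoeff_C]
  norm_num [Nat.choose]
  ring

section ShiodaInvariants

variable (H : CharGtSeven K) (c : ℕ → K)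
include H

lemma shJ2_binaryForm : shJ2 (binaryForm 8 c) =
    2 * (c 0 * c 8 - 8 * c 1 * c 7 + 28 * c 2 * c 6 - 56 * c 3 * c 5 + 35 * c 4 ^ 2) := by
  rw [shJ2, transvectant_eight_eight_eight H, octicPairing]
  ring

lemma shJ3_binaryForm : shJ3 (binaryForm 8 c) =
    6 * c 0 * c 4 * c 8 - 24 * c 0 * c 5 * c 7 + 18 * c 0 * c 6 ^ 2 - 24 * c 1 * c 3 * c 8 +
      72 * c 1 * c 4 * c 7 - 48 * c 1 * c 5 * c 6 - 48 * c 2 * c 3 * c 7 - 132 * c 2 * c 4 * c 6 +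
      144 * c 2 * c 5 ^ 2 + 18 * c 2 ^ 2 * c 8 - 216 * c 3 * c 4 * c 5 + 144 * c 3 ^ 2 * c 6 +
      90 * c 4 ^ 3 := by
  have := H.seven_ne_zero
  have := H.thirtyfive_ne_zero
  rw [shJ3, covG_binaryForm H, transvectant_eight_eight_eight H]
  simp only [octicPairing, covGCoeff]
  field_simp
  ring

lemma shJ4_binaryForm :
    shJ4 (binaryForm 8 c) = quarticPairing (covKCoeff c) (covKCoeff c) := by
  rw [shJ4, covK_binaryForm H, transvectant_four_four_four H]

lemma shJ5_binaryForm : shJ5 (binaryForm 8 c) =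
    quarticPairing (contractCoeff c (covKCoeff c)) (covKCoeff c) := by
  rw [shJ5, covM, covK_binaryForm H, transvectant_eight_four_four H, transvectant_four_four_four H]

lemma shJ6_binaryForm : shJ6 (binaryForm 8 c) =
    quarticPairing (covKCoeff c) (hessianCoeff (covKCoeff c)) := by
  rw [shJ6, covH_binaryForm H, covK_binaryForm H, transvectant_four_four_four H]

lemma shJ7_binaryForm : shJ7 (binaryForm 8 c) =
    quarticPairing (contractCoeff c (covKCoeff c)) (hessianCoeff (covKCoeff c)) := by
  rw [shJ7, covM, covH_binaryForm H, covK_binaryForm H, transvectant_eight_four_four H,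
    transvectant_four_four_four H]

lemma shJ8_binaryForm : shJ8 (binaryForm 8 c) =
    quarticPairing (contractCoeff (covGCoeff c) (covKCoeff c)) (hessianCoeff (covKCoeff c)) := by
  rw [shJ8, covP, covH_binaryForm H, covK_binaryForm H, covG_binaryForm H,
    transvectant_eight_four_four H, transvectant_four_four_four H]

lemma shJ9_binaryForm : shJ9 (binaryForm 8 c) =
    quarticPairing (contractCoeff c (hessianCoeff (covKCoeff c)))
      (hessianCoeff (covKCoeff c)) := by
  rw [shJ9, covN, covH_binaryForm H, transvectant_eight_four_four H,
    transvectant_four_four_four H]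

lemma shJ10_binaryForm : shJ10 (binaryForm 8 c) =
    quarticPairing (contractCoeff (covGCoeff c) (hessianCoeff (covKCoeff c)))
      (hessianCoeff (covKCoeff c)) := by
  rw [shJ10, covQ, covH_binaryForm H, covG_binaryForm H, transvectant_eight_four_four H,
    transvectant_four_four_four H]

end ShiodaInvariants

/-! ### Invariants of octics with `𝔨 = eX⁴ + 6κX²Z²` -/

section SparseQuartic

variable (H : CharGtSeven K) {c : ℕ → K} (h1 : covKCoeff c 1 = 0) (h3 : covKCoeff c 3 = 0)
  (h4 : covKCoeff c 4 = 0)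
include H h1 h3 h4

lemma shJ4_of_covKCoeff_eq_zero : shJ4 (binaryForm 8 c) = 6 * covKCoeff c 2 ^ 2 := by
  rw [shJ4_binaryForm H, quarticPairing, h1, h3, h4]
  ring

lemma shJ5_of_covKCoeff_eq_zero : shJ5 (binaryForm 8 c) =
    covKCoeff c 0 ^ 2 * c 8 + 12 * covKCoeff c 0 * covKCoeff c 2 * c 6 +
      36 * covKCoeff c 2 ^ 2 * c 4 := by
  rw [shJ5_binaryForm H]
  simp only [quarticPairing, contractCoeff, h1, h3, h4]
  ring

lemma hessianCoeff_two_of_covKCoeff_eq_zero :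
    hessianCoeff (covKCoeff c) 2 = -covKCoeff c 2 ^ 2 := by
  have := H.three_ne_zero
  simp only [hessianCoeff, h1, h3, h4]
  field_simp
  ring

omit H in
lemma hessianCoeff_of_covKCoeff_eq_zero :
    hessianCoeff (covKCoeff c) 0 = 2 * covKCoeff c 0 * covKCoeff c 2 ∧
      hessianCoeff (covKCoeff c) 1 = 0 ∧ hessianCoeff (covKCoeff c) 3 = 0 ∧
      hessianCoeff (covKCoeff c) 4 = 0 := by
  simp only [hessianCoeff, h1, h3, h4]
  exact ⟨by ring, by ring, by ring, by ring⟩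

lemma quarticPairing_hessianCoeff (q : ℕ → K) :
    quarticPairing q (hessianCoeff (covKCoeff c)) =
      2 * covKCoeff c 0 * covKCoeff c 2 * q 4 - 6 * covKCoeff c 2 ^ 2 * q 2 := by
  obtain ⟨g0, g1, g3, g4⟩ := hessianCoeff_of_covKCoeff_eq_zero h1 h3 h4
  rw [quarticPairing, g0, g1, hessianCoeff_two_of_covKCoeff_eq_zero H h1 h3 h4, g3, g4]
  ring

lemma contractCoeff_hessianCoeff (d : ℕ → K) (i : ℕ) :
    contractCoeff d (hessianCoeff (covKCoeff c)) i =
      2 * covKCoeff c 0 * covKCoeff c 2 * d (i + 4) - 6 * covKCoeff c 2 ^ 2 * d (i + 2) := by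
  obtain ⟨g0, g1, g3, g4⟩ := hessianCoeff_of_covKCoeff_eq_zero h1 h3 h4
  rw [contractCoeff, g0, g1, hessianCoeff_two_of_covKCoeff_eq_zero H h1 h3 h4, g3, g4]
  ring

lemma shJ6_of_covKCoeff_eq_zero : shJ6 (binaryForm 8 c) = -6 * covKCoeff c 2 ^ 3 := by
  rw [shJ6_binaryForm H, quarticPairing_hessianCoeff H h1 h3 h4, h4]
  ring

lemma shJ7_of_covKCoeff_eq_zero : shJ7 (binaryForm 8 c) =
    2 * covKCoeff c 0 ^ 2 * covKCoeff c 2 * c 8 + 6 * covKCoeff c 0 * covKCoeff c 2 ^ 2 * c 6 -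
      36 * covKCoeff c 2 ^ 3 * c 4 := by
  rw [shJ7_binaryForm H, quarticPairing_hessianCoeff H h1 h3 h4]
  simp only [contractCoeff, h1, h3, h4]
  ring

lemma shJ8_of_covKCoeff_eq_zero : shJ8 (binaryForm 8 c) =
    2 * covKCoeff c 0 ^ 2 * covKCoeff c 2 * covGCoeff c 8 +
      6 * covKCoeff c 0 * covKCoeff c 2 ^ 2 * covGCoeff c 6 -
      36 * covKCoeff c 2 ^ 3 * covGCoeff c 4 := by
  rw [shJ8_binaryForm H, quarticPairing_hessianCoeff H h1 h3 h4]
  simp only [contractCoeff, h1, h3, h4]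
  ring

lemma shJ9_of_covKCoeff_eq_zero : shJ9 (binaryForm 8 c) =
    4 * covKCoeff c 0 ^ 2 * covKCoeff c 2 ^ 2 * c 8 -
      24 * covKCoeff c 0 * covKCoeff c 2 ^ 3 * c 6 + 36 * covKCoeff c 2 ^ 4 * c 4 := by
  rw [shJ9_binaryForm H, quarticPairing_hessianCoeff H h1 h3 h4]
  simp only [contractCoeff_hessianCoeff H h1 h3 h4]
  ring

lemma shJ10_of_covKCoeff_eq_zero : shJ10 (binaryForm 8 c) =
    4 * covKCoeff c 0 ^ 2 * covKCoeff c 2 ^ 2 * covGCoeff c 8 -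
      24 * covKCoeff c 0 * covKCoeff c 2 ^ 3 * covGCoeff c 6 +
      36 * covKCoeff c 2 ^ 4 * covGCoeff c 4 := by
  rw [shJ10_binaryForm H, quarticPairing_hessianCoeff H h1 h3 h4]
  simp only [contractCoeff_hessianCoeff H h1 h3 h4]
  ring

end SparseQuartic

/-! ### Octics with automorphism group containing `C₂ × D₈` -/

/-- The octic `X⁸ + a₄X⁴Z⁴ + a₀Z⁸`; the standard form of the `C₂ × D₈` stratum is the case
`a₀ = 1`. -/
noncomputable def d8Octic (a₄ a₀ : K) : MvPolynomial (Fin 2) K :=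
  X 0 ^ 8 + C a₄ * X 0 ^ 4 * X 1 ^ 4 + C a₀ * X 1 ^ 8

lemma d8Octic_one (a : K) : d8Octic a 1 = X 0 ^ 8 + C a * X 0 ^ 4 * X 1 ^ 4 + X 1 ^ 8 := by
  rw [d8Octic, C_1, one_mul]

/-- The binomial-normalised coefficients of the octic `X⁸ + 70bX⁴Z⁴ + Z⁸`. -/
def d8Coeff (b : K) : ℕ → K
  | 0 => 1
  | 4 => b
  | 8 => 1
  | _ => 0

lemma binaryForm_d8Coeff (b : K) : binaryForm 8 (d8Coeff b) = d8Octic (70 * b) 1 := by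
  simp only [binaryForm_eight, d8Coeff, d8Octic, C_0, C_1, C_mul, map_ofNat]
  ring

section Invariants

variable (H : CharGtSeven K) (b : K)

lemma covKCoeff_d8Coeff : covKCoeff (d8Coeff b) 0 = 0 ∧ covKCoeff (d8Coeff b) 1 = 0 ∧
    covKCoeff (d8Coeff b) 2 = (1 - 25 * b ^ 2) / 3 ∧ covKCoeff (d8Coeff b) 3 = 0 ∧
    covKCoeff (d8Coeff b) 4 = 0 := by
  simp [covKCoeff, d8Coeff]

include H

lemma shJ2_d8Octic : shJ2 (d8Octic (70 * b) 1) = 2 + 70 * b ^ 2 := by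
  rw [← binaryForm_d8Coeff, shJ2_binaryForm H]
  simp only [d8Coeff]
  ring

lemma shJ3_d8Octic : shJ3 (d8Octic (70 * b) 1) = 6 * b + 90 * b ^ 3 := by
  rw [← binaryForm_d8Coeff, shJ3_binaryForm H]
  simp only [d8Coeff]
  ring

lemma shJ4_d8Octic : shJ4 (d8Octic (70 * b) 1) = 6 * ((1 - 25 * b ^ 2) / 3) ^ 2 := by
  obtain ⟨-, h1, h2, h3, h4⟩ := covKCoeff_d8Coeff b
  rw [← binaryForm_d8Coeff, shJ4_of_covKCoeff_eq_zero H h1 h3 h4, h2]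

lemma shJ5_d8Octic : shJ5 (d8Octic (70 * b) 1) = 36 * b * ((1 - 25 * b ^ 2) / 3) ^ 2 := by
  obtain ⟨h0, h1, h2, h3, h4⟩ := covKCoeff_d8Coeff b
  rw [← binaryForm_d8Coeff, shJ5_of_covKCoeff_eq_zero H h1 h3 h4, h0, h2]
  simp only [d8Coeff]
  ring

lemma satisfiesD8Relations_d8Octic : SatisfiesD8Relations (d8Octic (70 * b) 1) := by
  obtain ⟨h0, h1, h2, h3, h4⟩ := covKCoeff_d8Coeff b
  have hG : covGCoeff (d8Coeff b) 4 = (1 + 45 * b ^ 2) / 35 := by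
    simp only [covGCoeff, d8Coeff]
    ring
  rw [SatisfiesD8Relations, D8rel, shJ2_d8Octic H, shJ3_d8Octic H, shJ4_d8Octic H,
    shJ5_d8Octic H, ← binaryForm_d8Coeff, shJ6_of_covKCoeff_eq_zero H h1 h3 h4,
    shJ7_of_covKCoeff_eq_zero H h1 h3 h4, shJ8_of_covKCoeff_eq_zero H h1 h3 h4,
    shJ9_of_covKCoeff_eq_zero H h1 h3 h4, shJ10_of_covKCoeff_eq_zero H h1 h3 h4, h0, h2, hG]
  simp only [d8Coeff]
  have := H.three_ne_zero
  have := H.thirtyfive_ne_zero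
  refine ⟨?_, ?_, ?_, ?_, ?_, ?_, ?_, ?_, ?_⟩ <;> (field_simp; ring)

lemma exists_eq_seventy_mul (a : K) : ∃ b, a = 70 * b :=
  ⟨a / 70, (mul_div_cancel₀ a H.seventy_ne_zero).symm⟩

lemma a4gen_linSubst_d8Octic (M : Matrix (Fin 2) (Fin 2) K) (a : K) {f : MvPolynomial (Fin 2) K}
    (hf : f = linSubst M (d8Octic a 1)) (hne : 30 * shJ3 f ^ 2 ≠ shJ2 f ^ 3) :
    a4gen (shJ2 f) (shJ3 f) (shJ4 f) (shJ5 f) = M.det ^ 4 * a := by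
  obtain ⟨b, rfl⟩ := exists_eq_seventy_mul H a
  have hden : 2 * shJ2 f ^ 3 - 60 * shJ3 f ^ 2 ≠ 0 := fun h => hne <|
    mul_left_cancel₀ H.two_ne_zero (by linear_combination -h)
  rw [a4gen, div_eq_iff hden, hf, shJ2_linSubst, shJ3_linSubst, shJ4_linSubst, shJ5_linSubst,
    shJ2_d8Octic H, shJ3_d8Octic H, shJ4_d8Octic H, shJ5_d8Octic H]
  have := H.three_ne_zero
  field_simp
  ring

lemma a4spec_linSubst_d8Octic (M : Matrix (Fin 2) (Fin 2) K) (a : K)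
    {f : MvPolynomial (Fin 2) K} (hf : f = linSubst M (d8Octic a 1)) (hne : shJ4 f ≠ 0) :
    a4spec (shJ4 f) (shJ5 f) = M.det ^ 4 * a := by
  obtain ⟨b, rfl⟩ := exists_eq_seventy_mul H a
  rw [a4spec, div_eq_iff (mul_ne_zero H.three_ne_zero hne), hf, shJ4_linSubst, shJ5_linSubst,
    shJ4_d8Octic H, shJ5_d8Octic H]
  ring

lemma a0of_linSubst_d8Octic (M : Matrix (Fin 2) (Fin 2) K) (a : K) :
    a0of (shJ2 (linSubst M (d8Octic a 1))) (M.det ^ 4 * a) = M.det ^ 8 := by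
  obtain ⟨b, rfl⟩ := exists_eq_seventy_mul H a
  have h140 : (140 : K) ≠ 0 := by
    rw [show (140 : K) = 2 * 70 by norm_num]
    exact mul_ne_zero H.two_ne_zero H.seventy_ne_zero
  have := H.two_ne_zero
  rw [a0of, shJ2_linSubst, shJ2_d8Octic H]
  field_simp
  ring

end Invariants

/-- Equivalence of binary forms under invertible linear substitutions. -/
def GLEquiv (f g : MvPolynomial (Fin 2) K) : Prop :=
  ∃ M : Matrix (Fin 2) (Fin 2) K, IsUnit M.det ∧ f = linSubst M g

lemma GLEquiv.refl (f : MvPolynomial (Fin 2) K) : GLEquiv f f :=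
  ⟨1, by rw [Matrix.det_one]; exact isUnit_one, by rw [linSubst_one]⟩

lemma GLEquiv.symm {f g : MvPolynomial (Fin 2) K} (h : GLEquiv f g) : GLEquiv g f := by
  obtain ⟨M, hM, rfl⟩ := h
  exact ⟨M⁻¹, Matrix.isUnit_nonsing_inv_det _ hM, by rw [linSubst_inv_linSubst hM]⟩

lemma GLEquiv.trans {f g h : MvPolynomial (Fin 2) K} (hfg : GLEquiv f g) (hgh : GLEquiv g h) :
    GLEquiv f h := by
  obtain ⟨M, hM, rfl⟩ := hfg
  obtain ⟨N, hN, rfl⟩ := hgh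
  refine ⟨N * M, ?_, by rw [linSubst_linSubst]⟩
  rw [Matrix.det_mul]
  exact hN.mul hM

lemma linSubst_diag_d8Octic (l a₄ a₀ : K) :
    linSubst !![1, 0; 0, l] (d8Octic a₄ a₀) = d8Octic (l ^ 4 * a₄) (l ^ 8 * a₀) := by
  simp only [d8Octic, map_add, map_mul, map_pow, linSubst_C, linSubst_X, Matrix.of_apply,
    Matrix.cons_val', Matrix.cons_val_zero, Matrix.cons_val_one, Matrix.cons_val_fin_one, C_0, C_1,
    zero_mul, one_mul, add_zero, zero_add]
  ring

lemma isUnit_det_diag_one {l : K} (hl : l ≠ 0) :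
    IsUnit (!![1, 0; 0, l] : Matrix (Fin 2) (Fin 2) K).det := by
  rw [Matrix.det_fin_two_of, one_mul, zero_mul, sub_zero, isUnit_iff_ne_zero]
  exact hl

lemma glEquiv_linSubst_d8Octic {M : Matrix (Fin 2) (Fin 2) K} (hM : IsUnit M.det) (a : K) :
    GLEquiv (linSubst M (d8Octic a 1)) (d8Octic (M.det ^ 4 * a) (M.det ^ 8)) := by
  have hdet := hM.ne_zero
  refine ⟨!![1, 0; 0, M.det⁻¹] * M, ?_, ?_⟩
  · rw [Matrix.det_mul]
    exact (isUnit_det_diag_one (inv_ne_zero hdet)).mul hM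
  · rw [← linSubst_linSubst, linSubst_diag_d8Octic]
    congr 2
    · field_simp
    · field_simp

lemma SatisfiesD8Relations.of_glEquiv {f g : MvPolynomial (Fin 2) K} (hg : SatisfiesD8Relations g)
    (h : GLEquiv f g) : SatisfiesD8Relations f := by
  obtain ⟨M, -, rfl⟩ := h
  exact hg.linSubst M

theorem satisfiesD8Relations_of_glEquiv (H : CharGtSeven K) {f : MvPolynomial (Fin 2) K} {a : K}
    (h : GLEquiv f (d8Octic a 1)) : SatisfiesD8Relations f := by
  obtain ⟨b, rfl⟩ := exists_eq_seventy_mul H a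
  exact (satisfiesD8Relations_d8Octic H b).of_glEquiv h

theorem glEquiv_d8Octic_a4gen (H : CharGtSeven K) {f : MvPolynomial (Fin 2) K} {a : K}
    (h : GLEquiv f (d8Octic a 1)) (hne : 30 * shJ3 f ^ 2 ≠ shJ2 f ^ 3) :
    GLEquiv f (d8Octic (a4gen (shJ2 f) (shJ3 f) (shJ4 f) (shJ5 f))
      (a0of (shJ2 f) (a4gen (shJ2 f) (shJ3 f) (shJ4 f) (shJ5 f)))) := by
  obtain ⟨M, hM, hf⟩ := h
  rw [a4gen_linSubst_d8Octic H M a hf hne, hf, a0of_linSubst_d8Octic H]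
  exact glEquiv_linSubst_d8Octic hM a

theorem glEquiv_d8Octic_a4spec (H : CharGtSeven K) {f : MvPolynomial (Fin 2) K} {a : K}
    (h : GLEquiv f (d8Octic a 1)) (hne : shJ4 f ≠ 0) :
    GLEquiv f (d8Octic (a4spec (shJ4 f) (shJ5 f))
      (a0of (shJ2 f) (a4spec (shJ4 f) (shJ5 f)))) := by
  obtain ⟨M, hM, hf⟩ := h
  rw [a4spec_linSubst_d8Octic H M a hf hne, hf, a0of_linSubst_d8Octic H]
  exact glEquiv_linSubst_d8Octic hM a

/-! ### Elementary substitutions -/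

/-- The coefficients of the degree `n` form with coefficients `c` after `Z ↦ tX + Z`. -/
def shearCoeff (n : ℕ) (t : K) (c : ℕ → K) (i : ℕ) : K :=
  ∑ j ∈ Finset.range (n - i + 1), (n - i).choose j * t ^ j * c (i + j)

lemma linSubst_shear_binaryForm (n : ℕ) (t : K) (c : ℕ → K) :
    linSubst !![1, 0; t, 1] (binaryForm n c) = binaryForm n (shearCoeff n t c) := by
  have hX : linSubst !![1, 0; t, 1] (X 0) = X 0 := by simp
  have hZ : linSubst !![1, 0; t, 1] (X 1) = X 1 + C t * X 0 := by simp [add_comm]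
  simp only [binaryForm, map_sum, map_mul, map_pow, linSubst_C, hX, hZ, add_pow, shearCoeff,
    Finset.mul_sum, Finset.sum_mul, Finset.sum_sigma']
  refine Finset.sum_bij' (fun p _ => ⟨p.2, p.1 - p.2⟩) (fun p _ => ⟨p.1 + p.2, p.1⟩) ?_ ?_ ?_ ?_ ?_
  · rintro ⟨i, j⟩ h
    simp only [Finset.mem_sigma, Finset.mem_range] at h ⊢
    lia
  · rintro ⟨j, l⟩ h
    simp only [Finset.mem_sigma, Finset.mem_range] at h ⊢
    lia
  · rintro ⟨i, j⟩ h
    simp only [Finset.mem_sigma, Finset.mem_range] at h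
    simp [Nat.add_sub_cancel' (by lia : j ≤ i)]
  · rintro ⟨j, l⟩ -
    simp
  · rintro ⟨i, j⟩ h
    simp only [Finset.mem_sigma, Finset.mem_range] at h
    obtain ⟨l, rfl⟩ := Nat.exists_eq_add_of_le (by lia : j ≤ i)
    obtain ⟨m, rfl⟩ := Nat.exists_eq_add_of_le (by lia : j + l ≤ n)
    have hchoose : (((j + l + m).choose (j + l) * (j + l).choose j : ℕ) :
        MvPolynomial (Fin 2) K) = ((j + l + m).choose j * (l + m).choose l : ℕ) := by
      rw [Nat.choose_mul (by lia), Nat.add_sub_cancel_left, show j + l + m - j = l + m by lia]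
    push_cast at hchoose
    dsimp only
    rw [show j + l + m - (j + l) = m by lia, show j + l - j = l by lia,
      show j + l + m - j = l + m by lia, map_natCast, map_natCast, map_natCast]
    linear_combination C t ^ l * C (c (j + l)) * X 0 ^ (l + m) * X 1 ^ j * hchoose

lemma linSubst_swap_binaryForm (n : ℕ) (c : ℕ → K) :
    linSubst !![0, 1; 1, 0] (binaryForm n c) = binaryForm n fun i => c (n - i) := by
  rw [binaryForm, ← Finset.sum_range_reflect, binaryForm, map_sum]
  refine Finset.sum_congr rfl fun i hi => ?_
  have hin : i ≤ n := Finset.mem_range_succ_iff.1 hi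
  rw [Nat.add_sub_cancel, Nat.sub_sub_self hin, Nat.choose_symm hin]
  simp [mul_comm]

lemma linSubst_diag_binaryForm (n : ℕ) (x z : K) (c : ℕ → K) :
    linSubst !![x, 0; 0, z] (binaryForm n c) = binaryForm n fun i => x ^ (n - i) * z ^ i * c i := by
  simp only [binaryForm, map_sum]
  refine Finset.sum_congr rfl fun i _ => ?_
  simp [mul_pow]
  ring

lemma glEquiv_shear (n : ℕ) (t : K) (c : ℕ → K) :
    GLEquiv (binaryForm n (shearCoeff n t c)) (binaryForm n c) :=
  ⟨!![1, 0; t, 1], by simp [Matrix.det_fin_two_of], (linSubst_shear_binaryForm n t c).symm⟩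

lemma glEquiv_swap (n : ℕ) (c : ℕ → K) :
    GLEquiv (binaryForm n fun i => c (n - i)) (binaryForm n c) :=
  ⟨!![0, 1; 1, 0], by simp [Matrix.det_fin_two_of], (linSubst_swap_binaryForm n c).symm⟩

lemma glEquiv_diag (n : ℕ) {x z : K} (hx : x ≠ 0) (hz : z ≠ 0) (c : ℕ → K) :
    GLEquiv (binaryForm n fun i => x ^ (n - i) * z ^ i * c i) (binaryForm n c) :=
  ⟨!![x, 0; 0, z], by simp [Matrix.det_fin_two_of, hx, hz], (linSubst_diag_binaryForm n x z c).symm⟩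

lemma exists_glEquiv_last_eq_zero [IsAlgClosed K] {n : ℕ} (hn : n ≠ 0) (c : ℕ → K) :
    ∃ d, GLEquiv (binaryForm n d) (binaryForm n c) ∧ d n = 0 := by
  by_cases hc : c n = 0
  · exact ⟨c, .refl _, hc⟩
  let p : Polynomial K :=
    ∑ j ∈ Finset.range (n + 1), Polynomial.C (n.choose j * c j) * Polynomial.X ^ j
  have hcoeff : p.coeff n = c n := by
    simp only [p, Polynomial.finsetSum_coeff, Polynomial.coeff_C_mul_X_pow]
    simp
  have hdeg : p.degree ≠ 0 := fun h => by
    rw [Polynomial.coeff_eq_zero_of_degree_lt (h.trans_lt (by exact_mod_cast hn.bot_lt))] at hcoeff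
    exact hc hcoeff.symm
  obtain ⟨t, ht⟩ := IsAlgClosed.exists_root p hdeg
  have hzero : shearCoeff n t c 0 = 0 := by
    rw [← ht.eq_zero]
    simp only [p, shearCoeff, Polynomial.eval_finsetSum, Nat.sub_zero, zero_add]
    refine Finset.sum_congr rfl fun j _ => ?_
    rw [Polynomial.eval_C_mul, Polynomial.eval_pow, Polynomial.eval_X]
    ring
  exact ⟨_, (glEquiv_swap n _).trans (glEquiv_shear n t c), by simpa using hzero⟩

lemma GLEquiv.squarefree {f g : MvPolynomial (Fin 2) K} (h : GLEquiv f g) (hg : Squarefree g) :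
    Squarefree f := by
  obtain ⟨M, hM, rfl⟩ := h
  exact squarefree_linSubst hM hg

lemma penultimate_ne_zero_of_squarefree {n : ℕ} {c : ℕ → K} (h : Squarefree (binaryForm (n + 1) c))
    (hlast : c (n + 1) = 0) : c n ≠ 0 := fun hn => by
  have hdvd : (X 0 * X 0 : MvPolynomial (Fin 2) K) ∣ binaryForm (n + 1) c := by
    refine Finset.dvd_sum fun i hi => ?_
    rcases lt_or_ge i n with hin | hin
    · rw [← sq]
      exact ((pow_dvd_pow _ (by lia)).mul_right _).mul_left _
    · have : i = n ∨ i = n + 1 := by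
        rw [Finset.mem_range] at hi
        lia
      rcases this with rfl | rfl
      · simp [hn]
      · simp [hlast]
  simpa using (h _ hdvd).map (constantCoeff (R := K))

lemma second_ne_zero_of_squarefree {n : ℕ} {c : ℕ → K}
    (h : Squarefree (binaryForm (n + 1) c)) (hzero : c 0 = 0) : c 1 ≠ 0 := by
  simpa using penultimate_ne_zero_of_squarefree ((glEquiv_swap (n + 1) c).squarefree h)
    (by simpa using hzero)

lemma exists_glEquiv_d8Octic_of_diagonal [IsAlgClosed K] {c : ℕ → K}
    (h : Squarefree (binaryForm 8 c)) (h1 : c 1 = 0) (h2 : c 2 = 0) (h3 : c 3 = 0) (h5 : c 5 = 0)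
    (h6 : c 6 = 0) (h7 : c 7 = 0) : ∃ a, GLEquiv (binaryForm 8 c) (d8Octic a 1) := by
  have hc0 : c 0 ≠ 0 := fun h0 => second_ne_zero_of_squarefree h h0 h1
  have hc8 : c 8 ≠ 0 := fun h8 => penultimate_ne_zero_of_squarefree h h8 h7
  obtain ⟨x, hx⟩ := IsAlgClosed.exists_pow_nat_eq (c 0) (n := 8) (by norm_num)
  obtain ⟨z, hz⟩ := IsAlgClosed.exists_pow_nat_eq (c 8) (n := 8) (by norm_num)
  have hx0 : x ≠ 0 := by
    rintro rfl
    exact hc0 (by rw [← hx, zero_pow (by norm_num)])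
  have hz0 : z ≠ 0 := by
    rintro rfl
    exact hc8 (by rw [← hz, zero_pow (by norm_num)])
  obtain ⟨b, hb⟩ : ∃ b, c 4 = x ^ 4 * z ^ 4 * b :=
    ⟨c 4 / (x ^ 4 * z ^ 4), by field_simp⟩
  refine ⟨70 * b, ?_⟩
  rw [← binaryForm_d8Coeff]
  convert glEquiv_diag 8 hx0 hz0 (d8Coeff b) using 1
  simp [binaryForm_eight, d8Coeff, h1, h2, h3, h5, h6, h7, hb, ← hx, ← hz]

/-! ### Quartics with a repeated root -/

/-- A quartic is degenerate if its discriminant `I³ - 6J²` vanishes, where `I = (q,q)₄` and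
`J = (q,(q,q)₂)₄`. -/
def IsDegenerateQuartic (q : MvPolynomial (Fin 2) K) : Prop :=
  constantCoeff (transvectant 4 4 4 q q) ^ 3 =
    6 * constantCoeff (transvectant 4 4 4 q (transvectant 4 4 2 q q)) ^ 2

lemma IsDegenerateQuartic.of_glEquiv {p q : MvPolynomial (Fin 2) K} (h : IsDegenerateQuartic q)
    (hpq : GLEquiv p q) : IsDegenerateQuartic p := by
  obtain ⟨M, -, rfl⟩ := hpq
  have hI := (isCovariant_id.transvectant isCovariant_id 4 4 4).constantCoeff_linSubst M q
  have hJ := (isCovariant_id.transvectant (isCovariant_id.transvectant isCovariant_id 4 4 2)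
    4 4 4).constantCoeff_linSubst M q
  rw [IsDegenerateQuartic] at h ⊢
  rw [hI, hJ]
  linear_combination M.det ^ 12 * h

lemma isDegenerateQuartic_binaryForm (H : CharGtSeven K) (k : ℕ → K) :
    IsDegenerateQuartic (binaryForm 4 k) ↔
      quarticPairing k k ^ 3 = 6 * quarticPairing k (hessianCoeff k) ^ 2 := by
  rw [IsDegenerateQuartic, transvectant_four_four_two H, transvectant_four_four_four H,
    transvectant_four_four_four H]

lemma shearCoeff_four (t : K) (k : ℕ → K) :
    shearCoeff 4 t k 0 = k 0 + 4 * t * k 1 + 6 * t ^ 2 * k 2 + 4 * t ^ 3 * k 3 + t ^ 4 * k 4 ∧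
    shearCoeff 4 t k 1 = k 1 + 3 * t * k 2 + 3 * t ^ 2 * k 3 + t ^ 3 * k 4 ∧
    shearCoeff 4 t k 2 = k 2 + 2 * t * k 3 + t ^ 2 * k 4 ∧
    shearCoeff 4 t k 3 = k 3 + t * k 4 ∧ shearCoeff 4 t k 4 = k 4 := by
  simp [shearCoeff, Finset.sum_range_succ, Nat.choose]

lemma exists_glEquiv_double_root_of_depressed (H : CharGtSeven K) {k : ℕ → K}
    (hk : IsDegenerateQuartic (binaryForm 4 k)) (h2 : k 2 = 0) (h3 : k 3 ≠ 0) (h4 : k 4 = 0) :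
    ∃ l, GLEquiv (binaryForm 4 l) (binaryForm 4 k) ∧ l 0 = 0 ∧ l 1 = 0 := by
  -- `hdisc` is the vanishing of the discriminant of the depressed cubic `k₀ + 4k₁t + 4k₃t³`.
  have hdisc : 64 * k 1 ^ 3 = -27 * k 0 ^ 2 * k 3 := by
    have := (isDegenerateQuartic_binaryForm H k).1 hk
    simp only [quarticPairing, hessianCoeff, h2, h4] at this
    apply mul_left_cancel₀ (mul_ne_zero (pow_ne_zero 3 H.two_ne_zero) (pow_ne_zero 3 h3))
    linear_combination -this
  by_cases h1 : k 1 = 0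
  · have h0 : k 0 ^ 2 = 0 := by
      apply mul_left_cancel₀ (mul_ne_zero (pow_ne_zero 3 H.three_ne_zero) h3)
      linear_combination hdisc - 64 * k 1 ^ 2 * h1
    exact ⟨k, .refl _, pow_eq_zero_iff two_ne_zero |>.1 h0, h1⟩
  · obtain ⟨r, hr⟩ : ∃ r, 2 ^ 3 * k 1 * r = -3 * k 0 :=
      ⟨-3 * k 0 / (2 ^ 3 * k 1), mul_div_cancel₀ _ (mul_ne_zero (pow_ne_zero 3 H.two_ne_zero) h1)⟩
    have hderiv : k 1 + 3 * r ^ 2 * k 3 = 0 := by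
      apply mul_left_cancel₀ (mul_ne_zero (pow_ne_zero 6 H.two_ne_zero) (pow_ne_zero 2 h1))
      linear_combination hdisc + 3 * k 3 * (8 * k 1 * r - 3 * k 0) * hr
    obtain ⟨s0, s1, -⟩ := shearCoeff_four r k
    refine ⟨_, glEquiv_shear 4 r k, ?_, ?_⟩
    · apply mul_left_cancel₀ H.three_ne_zero
      rw [s0, h2, h4]
      linear_combination 4 * r * hderiv + hr
    · rw [s1, h2, h4]
      linear_combination hderiv

lemma exists_glEquiv_double_root [IsAlgClosed K] (H : CharGtSeven K) {k : ℕ → K}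
    (hk : IsDegenerateQuartic (binaryForm 4 k)) :
    ∃ l, GLEquiv (binaryForm 4 l) (binaryForm 4 k) ∧ l 3 = 0 ∧ l 4 = 0 := by
  obtain ⟨k', hk', h4⟩ := exists_glEquiv_last_eq_zero four_ne_zero k
  by_cases h3 : k' 3 = 0
  · exact ⟨k', hk', h3, h4⟩
  have hdep := (glEquiv_shear 4 (-k' 2 / (2 * k' 3)) k').trans hk'
  obtain ⟨-, -, s2, s3, s4⟩ := shearCoeff_four (-k' 2 / (2 * k' 3)) k'
  obtain ⟨l, hl, hl0, hl1⟩ := exists_glEquiv_double_root_of_depressed H (hk.of_glEquiv hdep)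
    (by have := H.two_ne_zero
        rw [s2, h4]
        field_simp
        ring)
    (by rwa [s3, h4, mul_zero, add_zero]) (by rw [s4, h4])
  exact ⟨_, (glEquiv_swap 4 l).trans (hl.trans hdep), hl1, hl0⟩

theorem exists_glEquiv_quartic_normalForm [IsAlgClosed K] (H : CharGtSeven K) {k : ℕ → K}
    (hk : IsDegenerateQuartic (binaryForm 4 k)) :
    ∃ l, GLEquiv (binaryForm 4 l) (binaryForm 4 k) ∧ l 3 = 0 ∧ l 4 = 0 ∧
      (l 1 = 0 ∨ l 0 = 0 ∧ l 1 ≠ 0 ∧ l 2 = 0) := by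
  obtain ⟨k', hk', h3, h4⟩ := exists_glEquiv_double_root H hk
  have hshear (t : K) := shearCoeff_four t k'
  simp only [h3, h4, mul_zero, add_zero] at hshear
  by_cases h2 : k' 2 = 0
  · by_cases h1 : k' 1 = 0
    · exact ⟨k', hk', h3, h4, .inl h1⟩
    · obtain ⟨s0, s1, s2, s3, s4⟩ := hshear (-k' 0 / (4 * k' 1))
      refine ⟨_, (glEquiv_shear 4 _ k').trans hk', s3, s4, .inr ⟨?_, ?_, s2.trans h2⟩⟩
      · have hfour : (4 : K) ≠ 0 := by
          rw [show (4 : K) = 2 ^ 2 by norm_num]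
          exact pow_ne_zero 2 H.two_ne_zero
        rw [s0, h2]
        field_simp
        ring
      · rwa [s1, h2, mul_zero, add_zero]
  · obtain ⟨-, s1, -, s3, s4⟩ := hshear (-k' 1 / (3 * k' 2))
    refine ⟨_, (glEquiv_shear 4 _ k').trans hk', s3, s4, .inl ?_⟩
    have := H.three_ne_zero
    rw [s1]
    field_simp
    ring

/-! ### Consequences of the relations -/

section Relations

variable (H : CharGtSeven K) {j2 j3 j4 j5 j6 j7 j8 j9 j10 : K}
  (h : D8rel j2 j3 j4 j5 j6 j7 j8 j9 j10)
include H h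

lemma j4_cube_of_d8rel : j4 ^ 3 = 6 * j6 ^ 2 := by
  obtain ⟨r1, -, -, -, r5, -⟩ := h
  apply mul_left_cancel₀ (mul_ne_zero H.two_ne_zero (pow_ne_zero 3 H.three_ne_zero))
  linear_combination r1 - (18 * j6 + 9 * j4 * j2 + 60 * j3 ^ 2 - 2 * j2 ^ 3) * r5

lemma d8rel_of_j4_eq_zero (h4 : j4 = 0) : j5 = 0 ∧ j7 = 0 ∧ j9 = 0 ∧ 30 * j3 ^ 2 = j2 ^ 3 := by
  obtain ⟨r1, -, -, r4, -, r6, -, r8, -⟩ := h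
  subst h4
  have h5 : j5 = 0 := by
    refine pow_eq_zero_iff two_ne_zero |>.1 (mul_left_cancel₀ H.five_ne_zero ?_)
    linear_combination r4
  subst h5
  have h23 : 30 * j3 ^ 2 = j2 ^ 3 := by
    refine sub_eq_zero.1 (pow_eq_zero_iff two_ne_zero |>.1
      (mul_left_cancel₀ (pow_ne_zero 2 H.two_ne_zero) ?_))
    linear_combination -r1
  refine ⟨rfl, ?_, ?_, h23⟩
  · apply mul_left_cancel₀ H.three_ne_zero
    linear_combination r6
  · apply mul_left_cancel₀ (mul_ne_zero H.two_ne_zero (pow_ne_zero 2 H.three_ne_zero))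
    linear_combination r8 - 2 * j3 * h23

section Parametrised

variable {k : K} (hk : k ≠ 0) (h4 : j4 = 6 * k ^ 2) (h6 : j6 = -6 * k ^ 3)
include h4 h6

lemma thirty_mul_j3_sq_of_d8rel : 30 * j3 ^ 2 = j2 ^ 3 - 27 * k ^ 2 * j2 - 54 * k ^ 3 := by
  obtain ⟨-, -, -, -, r5, -⟩ := h
  apply mul_left_cancel₀ H.two_ne_zero
  rw [h4, h6] at r5
  linear_combination -r5

include hk

lemma j5_mul_of_d8rel : j5 * (j2 + 3 * k) = 18 * k ^ 2 * j3 := by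
  have h33 := thirty_mul_j3_sq_of_d8rel H h h4 h6
  obtain ⟨-, r2, r3, -⟩ := h
  subst h4
  have hprod : (j2 - 3 * k) * (j5 * (j2 + 3 * k) - 18 * k ^ 2 * j3) = 0 := by
    apply mul_left_cancel₀ H.two_ne_zero
    linear_combination -r3 + 2 * j3 * h33
  rcases mul_eq_zero.1 hprod with hj2 | hj5
  · obtain rfl : j2 = 3 * k := sub_eq_zero.1 hj2
    have hj3 : j3 ≠ 0 := by
      rintro rfl
      apply pow_ne_zero 3 hk
      apply mul_left_cancel₀ (mul_ne_zero (pow_ne_zero 2 H.two_ne_zero)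
        (pow_ne_zero 3 H.three_ne_zero))
      linear_combination h33
    apply mul_left_cancel₀ hj3
    apply mul_left_cancel₀ (mul_ne_zero H.five_ne_zero H.two_ne_zero)
    linear_combination k * r2
  · exact sub_eq_zero.1 hj5

lemma j7_of_d8rel : j7 = -k * j5 := by
  have h5 := j5_mul_of_d8rel H h hk h4 h6
  obtain ⟨-, -, -, -, -, r6, -⟩ := h
  apply mul_left_cancel₀ H.three_ne_zero
  rw [h4] at r6
  linear_combination r6 + h5

lemma j9_of_d8rel : j9 = k ^ 2 * j5 := by
  have h33 := thirty_mul_j3_sq_of_d8rel H h h4 h6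
  have h5 := j5_mul_of_d8rel H h hk h4 h6
  obtain ⟨-, -, -, -, -, -, -, r8, -⟩ := h
  apply mul_left_cancel₀ (mul_ne_zero H.two_ne_zero (pow_ne_zero 2 H.three_ne_zero))
  rw [h4] at r8
  linear_combination r8 - 2 * j3 * h33 + 2 * (j2 - 3 * k) * h5

omit hk in
lemma j8_of_d8rel : 35 * j8 = 18 * k ^ 4 - 21 * k ^ 3 * j2 := by
  have h33 := thirty_mul_j3_sq_of_d8rel H h h4 h6
  obtain ⟨-, -, -, -, -, -, r7, -⟩ := h
  apply mul_left_cancel₀ (mul_ne_zero (pow_ne_zero 2 H.two_ne_zero) (pow_ne_zero 2 H.three_ne_zero))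
  rw [h4] at r7
  linear_combination r7 + 14 * j2 * h33

omit hk in
lemma j5_sq_of_d8rel : 5 * j5 ^ 2 = 54 * k ^ 4 * (j2 - 6 * k) := by
  have h33 := thirty_mul_j3_sq_of_d8rel H h h4 h6
  obtain ⟨-, -, -, r4, -⟩ := h
  rw [h4] at r4
  linear_combination r4 + 6 * k ^ 2 * h33

end Parametrised

end Relations

lemma isDegenerateQuartic_covK (H : CharGtSeven K) {f : MvPolynomial (Fin 2) K}
    (hf : SatisfiesD8Relations f) : IsDegenerateQuartic (covK f) :=
  j4_cube_of_d8rel H hf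

lemma exists_glEquiv_of_covK (H : CharGtSeven K) {c l : ℕ → K}
    (h : GLEquiv (binaryForm 4 l) (covK (binaryForm 8 c))) :
    ∃ d, GLEquiv (binaryForm 8 d) (binaryForm 8 c) ∧
      ∃ u ≠ 0, ∀ i ≤ 4, covKCoeff d i = u * l i := by
  obtain ⟨M, hM, hl⟩ := h
  obtain ⟨d, hd⟩ := exists_eq_binaryForm H.factorial_eight_ne_zero
    (linSubst_isHomogeneous M (binaryForm_isHomogeneous 8 c))
  refine ⟨d, ⟨M, hM, hd.symm⟩, M.det ^ 6, pow_ne_zero 6 hM.ne_zero, fun i hi => ?_⟩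
  refine binaryForm_injOn (d := fun i => M.det ^ 6 * l i) H.factorial_four_ne_zero ?_ hi
  rw [← covK_binaryForm H, ← hd, isCovariant_covK M, ← hl]
  simp only [binaryForm, Finset.smul_sum, smul_eq_C_mul, ← mul_assoc, ← C_mul]
  refine Finset.sum_congr rfl fun j _ => ?_
  rw [mul_comm (M.det ^ 6) _]

/-! ### Octics with `𝔨` a multiple of `X²Z²` -/

/-- The polynomial conditions that the nine relations impose on the coefficients of an octic whose
covariant `𝔨` is a nonzero multiple of `X²Z²`: the vanishing of the other coefficients of `𝔨`
(constant factors removed), two bilinear conditions from `J₂` and `J₈`, a cubic one from `J₃`, and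
the nonvanishing of the middle coefficient of `𝔨` in the resulting form. -/
structure IsAdapted (c : ℕ → K) : Prop where
  cov_zero : c 0 * c 6 - 6 * c 1 * c 5 + 15 * c 2 * c 4 - 10 * c 3 ^ 2 = 0
  cov_one : c 0 * c 7 - 5 * c 1 * c 6 + 9 * c 2 * c 5 - 5 * c 3 * c 4 = 0
  cov_three : c 1 * c 8 - 5 * c 2 * c 7 + 9 * c 3 * c 6 - 5 * c 4 * c 5 = 0
  cov_four : c 2 * c 8 - 6 * c 3 * c 7 + 15 * c 4 * c 6 - 10 * c 5 ^ 2 = 0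
  mul_one_seven : c 1 * c 7 = 9 * (c 3 * c 5)
  mul_two_six : c 2 * c 6 = 4 * (c 3 * c 5)
  cubic : -(4 * c 0 * c 5 * c 7) + 3 * c 0 * c 6 ^ 2 - 4 * c 1 * c 3 * c 8 - 8 * c 1 * c 5 * c 6 -
    8 * c 2 * c 3 * c 7 + 24 * c 2 * c 5 ^ 2 + 3 * c 2 ^ 2 * c 8 + 24 * c 3 ^ 2 * c 6 = 0
  cov_two_ne_zero : c 0 * c 8 - 16 * (c 3 * c 5) - 25 * c 4 ^ 2 ≠ 0

lemma eq_sq_of_relations (H : CharGtSeven K) {x y b : K} (hx : x ≠ 0) (hy : y ≠ 0)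
    (h1 : 9 * x * y ^ 2 - 9 * y ^ 3 * b + 3 * y ^ 2 - 6 * x ^ 2 - b * x * y = 0)
    (h2 : 9 * x * y - 9 * b * x ^ 2 + 3 * x ^ 2 * y - 6 * y ^ 3 - b * x * y ^ 2 = 0)
    (h3 : b * (x - y ^ 2) ^ 2 = 0) : x = y ^ 2 := by
  rcases mul_eq_zero.1 h3 with rfl | hsq
  · have hquad : 3 * x + x ^ 2 = 2 * y ^ 2 := by
      apply mul_left_cancel₀ (mul_ne_zero H.three_ne_zero hy)
      linear_combination h2
    have hx1 : (x + 1) ^ 2 = 0 := by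
      apply mul_left_cancel₀ (mul_ne_zero (pow_ne_zero 2 H.three_ne_zero) hx)
      linear_combination 2 * h1 + (9 * x + 3) * hquad
    obtain rfl : x = -1 := eq_neg_of_add_eq_zero_left (pow_eq_zero_iff two_ne_zero |>.1 hx1)
    apply mul_left_cancel₀ H.two_ne_zero
    linear_combination hquad
  · exact sub_eq_zero.1 (pow_eq_zero_iff two_ne_zero |>.1 hsq)

lemma mul_eq_of_relations (H : CharGtSeven K) {y b p q : K} (hy : y ≠ 0)
    (h : 9 * y ^ 2 * y ^ 2 - 9 * y ^ 3 * b + 3 * y ^ 2 - 6 * (y ^ 2) ^ 2 - b * y ^ 2 * y = 0)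
    (hp : p = 9 * y ^ 2 * y - 15 * y ^ 2 * b + 5 * y)
    (hq : q * (y ^ 2 * y ^ 2) = 9 * y - 15 * b * y ^ 2 + 5 * y ^ 2 * y) :
    p * q = 16 + 25 * b ^ 2 := by
  have hb : 10 * b * y = 3 * y ^ 2 + 3 := by
    apply mul_left_cancel₀ (pow_ne_zero 2 hy)
    linear_combination -h
  have hp' : 2 * p = 9 * y ^ 3 + y := by linear_combination 2 * hp - 3 * y * hb
  have hq' : 2 * (y ^ 3 * q) = 9 + y ^ 2 := by
    apply mul_left_cancel₀ hy
    linear_combination 2 * hq - 3 * y * hb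
  apply mul_left_cancel₀ (mul_ne_zero (pow_ne_zero 2 H.two_ne_zero) (pow_ne_zero 3 hy))
  linear_combination 2 * (y ^ 3 * q) * hp' + (9 * y ^ 3 + y) * hq' -
    y * (10 * b * y + 3 * y ^ 2 + 3) * hb

namespace IsAdapted

variable {c : ℕ → K}

lemma reverse (hc : IsAdapted c) : IsAdapted fun i => c (8 - i) where
  cov_zero := by linear_combination hc.cov_four
  cov_one := by linear_combination hc.cov_three
  cov_three := by linear_combination hc.cov_one
  cov_four := by linear_combination hc.cov_zero
  mul_one_seven := by linear_combination hc.mul_one_seven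
  mul_two_six := by linear_combination hc.mul_two_six
  cubic := by linear_combination hc.cubic
  cov_two_ne_zero := fun h => hc.cov_two_ne_zero (by linear_combination h)

lemma rescale (hc : IsAdapted c) {a m : K} (ha : a ≠ 0) (hm : m ≠ 0) :
    IsAdapted fun i => a * m ^ i * c i where
  cov_zero := by linear_combination a ^ 2 * m ^ 6 * hc.cov_zero
  cov_one := by linear_combination a ^ 2 * m ^ 7 * hc.cov_one
  cov_three := by linear_combination a ^ 2 * m ^ 9 * hc.cov_three
  cov_four := by linear_combination a ^ 2 * m ^ 10 * hc.cov_four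
  mul_one_seven := by linear_combination a ^ 2 * m ^ 8 * hc.mul_one_seven
  mul_two_six := by linear_combination a ^ 2 * m ^ 8 * hc.mul_two_six
  cubic := by linear_combination a ^ 3 * m ^ 12 * hc.cubic
  cov_two_ne_zero := fun h => hc.cov_two_ne_zero <| by
    apply mul_left_cancel₀ (mul_ne_zero (pow_ne_zero 2 ha) (pow_ne_zero 8 hm))
    linear_combination h

lemma three_ne_one_of_five_eq_one (H : CharGtSeven K) (hc : IsAdapted c) (h5 : c 5 = 1) :
    c 3 ≠ 1 := fun h3 => by
  obtain ⟨k0, k1, k3, k4, h17, h26, hcub, hne⟩ := hc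
  rw [h3, h5] at h17 h26
  obtain ⟨x, hcx⟩ : ∃ x, c 1 = 3 * x := ⟨c 1 / 3, by field_simp [H.three_ne_zero]⟩
  obtain ⟨y, hcy⟩ : ∃ y, c 2 = 2 * y := ⟨c 2 / 2, by field_simp [H.two_ne_zero]⟩
  have hx7 : x * c 7 = 3 := by
    apply mul_left_cancel₀ H.three_ne_zero
    linear_combination h17 - c 7 * hcx
  have hy6 : y * c 6 = 2 := by
    apply mul_left_cancel₀ H.two_ne_zero
    linear_combination h26 - c 6 * hcy
  have hx : x ≠ 0 := left_ne_zero_of_mul (hx7 ▸ H.three_ne_zero)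
  have hy : y ≠ 0 := left_ne_zero_of_mul (hy6 ▸ H.two_ne_zero)
  simp only [h3, h5, hcx, hcy] at k0 k1 k3 k4 hcub hne
  have hp : c 0 = 9 * x * y - 15 * y ^ 2 * c 4 + 5 * y := by
    apply mul_left_cancel₀ H.two_ne_zero
    linear_combination y * k0 - c 0 * hy6
  have hq : c 8 * (x * y ^ 2) = 9 * y - 15 * c 4 * x + 5 * x * y := by
    apply mul_left_cancel₀ H.two_ne_zero
    linear_combination x * y * k4 + 6 * y * hx7 - 15 * c 4 * x * hy6
  have hrel₁ : 9 * x * y ^ 2 - 9 * y ^ 3 * c 4 + 3 * y ^ 2 - 6 * x ^ 2 - c 4 * x * y = 0 := by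
    apply mul_left_cancel₀ H.five_ne_zero
    linear_combination x * y * k1 - 3 * y * hp - c 0 * y * hx7 + 15 * x ^ 2 * hy6
  have hrel₂ : 9 * x * y - 9 * c 4 * x ^ 2 + 3 * x ^ 2 * y - 6 * y ^ 3 - c 4 * x * y ^ 2 = 0 := by
    apply mul_left_cancel₀ H.five_ne_zero
    linear_combination x * y ^ 2 * k3 - 3 * x * hq + 10 * y ^ 3 * hx7 - 9 * x * y * hy6
  have hrel₃ : c 4 * (x - y ^ 2) ^ 2 = 0 := by
    apply mul_left_cancel₀ (mul_ne_zero (mul_ne_zero (pow_ne_zero 2 H.two_ne_zero)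
      (pow_ne_zero 2 H.three_ne_zero)) H.five_ne_zero)
    linear_combination x * y ^ 2 * hcub + 4 * c 0 * y ^ 2 * hx7 -
      3 * c 0 * x * (c 6 * y + 2) * hy6 + 24 * x ^ 2 * y * hy6 + 16 * y ^ 3 * hx7 -
      24 * x * y * hy6 - 12 * (x - y ^ 2) * hp + 12 * (x - y ^ 2) * hq
  obtain rfl := eq_sq_of_relations H hx hy hrel₁ hrel₂ hrel₃
  apply hne
  linear_combination mul_eq_of_relations H hy hrel₁ hp hq

lemma mul_three_five_eq_zero [IsAlgClosed K] (H : CharGtSeven K) (hc : IsAdapted c) :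
    c 3 * c 5 = 0 := by
  by_contra h35
  obtain ⟨h3, h5⟩ := mul_ne_zero_iff.1 h35
  obtain ⟨m, hm⟩ := IsAlgClosed.exists_pow_nat_eq (c 3 / c 5) two_pos
  have hm0 : m ≠ 0 := by
    rintro rfl
    exact div_ne_zero h3 h5 (by rw [← hm, zero_pow two_ne_zero])
  have hm3 : m ^ 3 * c 3 ≠ 0 := mul_ne_zero (pow_ne_zero 3 hm0) h3
  apply three_ne_one_of_five_eq_one H (hc.rescale (inv_ne_zero hm3) hm0)
  · rw [eq_div_iff h5] at hm
    rw [mul_assoc, inv_mul_eq_one₀ hm3]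
    linear_combination -m ^ 3 * hm
  · rw [mul_assoc, inv_mul_cancel₀ hm3]

lemma head_ne_zero [IsAlgClosed K] (H : CharGtSeven K) (hc : IsAdapted c)
    (hhead : c 0 = 0 → c 1 ≠ 0) (hlast : c 8 = 0 → c 7 ≠ 0) : c 0 ≠ 0 := fun h0 => by
  have h1 := hhead h0
  have h35 := hc.mul_three_five_eq_zero H
  have h7 : c 7 = 0 := by simpa [h35, h1] using hc.mul_one_seven
  have h26 : c 2 * c 6 = 0 := by simpa [h35] using hc.mul_two_six
  have h8 : c 8 ≠ 0 := fun h8 => hlast h8 h7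
  obtain ⟨k0, k1, k3, -⟩ := hc
  simp only [h0, h7] at k0 k1 k3
  have h3 : c 3 = 0 := by
    rcases mul_eq_zero.1 h35 with h3 | h5
    · exact h3
    refine pow_eq_zero_iff three_ne_zero |>.1
      (mul_left_cancel₀ (mul_ne_zero H.two_ne_zero H.five_ne_zero) ?_)
    simp only [h5] at k0 k1
    linear_combination -c 3 * k0 - 3 * c 2 * k1 - 15 * c 1 * h26
  simp only [h3] at k0 k1 k3
  have h25 : c 2 * c 5 = 0 := by
    refine pow_eq_zero_iff two_ne_zero |>.1
      (mul_left_cancel₀ (pow_ne_zero 2 H.three_ne_zero) ?_)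
    linear_combination c 2 * c 5 * k1 + 5 * c 1 * c 5 * h26
  have h5 : c 5 = 0 := by
    refine pow_eq_zero_iff two_ne_zero |>.1
      (mul_left_cancel₀ (mul_ne_zero (mul_ne_zero H.two_ne_zero H.three_ne_zero) h1) ?_)
    linear_combination -c 5 * k0 + 15 * c 4 * h25
  exact mul_ne_zero h1 h8 (by linear_combination k3 + 5 * c 4 * h5)

lemma off_diagonal_eq_zero_of_five_eq_zero (H : CharGtSeven K) (hc : IsAdapted c) (h0 : c 0 ≠ 0)
    (h8 : c 8 ≠ 0) (h5 : c 5 = 0) : c 1 = 0 ∧ c 2 = 0 ∧ c 3 = 0 ∧ c 6 = 0 ∧ c 7 = 0 := by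
  obtain ⟨k0, k1, k3, k4, h17, h26, -⟩ := hc
  simp only [h5, mul_zero, sub_zero, add_zero, zero_pow two_ne_zero] at k0 k1 k3 k4 h17 h26
  have n2 := H.two_ne_zero
  have n3 := H.three_ne_zero
  have n5 := H.five_ne_zero
  have h6 : c 6 = 0 := by
    by_contra h6
    have h2 : c 2 = 0 := by grind
    have h37 : c 3 * c 7 = 0 := by
      apply mul_left_cancel₀ (mul_ne_zero (pow_ne_zero 2 n3) h6)
      linear_combination c 7 * k3 - c 8 * h17 + 5 * c 7 ^ 2 * h2
    have h4 : c 4 = 0 := by grind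
    have h7 : c 7 = 0 := by grind
    have h1 : c 1 = 0 := by grind
    have h3 : c 3 = 0 := by
      apply mul_left_cancel₀ (mul_ne_zero (pow_ne_zero 2 n3) h6)
      linear_combination k3 - c 8 * h1 + 5 * c 7 * h2
    grind
  have h7 : c 7 = 0 := by
    by_contra h7
    have h1 : c 1 = 0 := by grind
    have h2 : c 2 = 0 := by grind
    have h3 : c 3 = 0 := by
      apply mul_left_cancel₀ (mul_ne_zero (mul_ne_zero n2 n3) h7)
      linear_combination -k4 + c 8 * h2 + 15 * c 4 * h6
    grind
  have h2 : c 2 = 0 := by grind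
  have h1 : c 1 = 0 := by grind
  have h3 : c 3 = 0 := by
    refine pow_eq_zero_iff two_ne_zero |>.1 (mul_left_cancel₀ (mul_ne_zero n2 n5) ?_)
    linear_combination -k0 + c 0 * h6 + 15 * c 4 * h2
  exact ⟨h1, h2, h3, h6, h7⟩

lemma off_diagonal_eq_zero [IsAlgClosed K] (H : CharGtSeven K) (hc : IsAdapted c)
    (hhead : c 0 = 0 → c 1 ≠ 0) (hlast : c 8 = 0 → c 7 ≠ 0) :
    c 1 = 0 ∧ c 2 = 0 ∧ c 3 = 0 ∧ c 5 = 0 ∧ c 6 = 0 ∧ c 7 = 0 := by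
  have h0 := hc.head_ne_zero H hhead hlast
  have h8 : c 8 ≠ 0 := hc.reverse.head_ne_zero H hlast hhead
  rcases mul_eq_zero.1 (hc.mul_three_five_eq_zero H) with h3 | h5
  · obtain ⟨h7, h6, h5, h2, h1⟩ := hc.reverse.off_diagonal_eq_zero_of_five_eq_zero H h8 h0 h3
    exact ⟨h1, h2, h3, h5, h6, h7⟩
  · obtain ⟨h1, h2, h3, h6, h7⟩ := hc.off_diagonal_eq_zero_of_five_eq_zero H h0 h8 h5
    exact ⟨h1, h2, h3, h5, h6, h7⟩

end IsAdapted

/-! ### Octics with `𝔨 = αX⁴ + βX²Z²` and `β ≠ 0` -/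

lemma three_mul_covKCoeff_two (H : CharGtSeven K) (c : ℕ → K) : 3 * covKCoeff c 2 =
    c 0 * c 8 - 2 * c 1 * c 7 - 8 * c 2 * c 6 + 34 * c 3 * c 5 - 25 * c 4 ^ 2 :=
  mul_div_cancel₀ _ H.three_ne_zero

lemma thirtyfive_mul_covGCoeff_four (H : CharGtSeven K) (c : ℕ → K) : 35 * covGCoeff c 4 =
    c 0 * c 8 + 12 * c 1 * c 7 - 22 * c 2 * c 6 - 36 * c 3 * c 5 + 45 * c 4 ^ 2 :=
  mul_div_cancel₀ _ H.thirtyfive_ne_zero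

lemma seven_mul_covGCoeff_six (H : CharGtSeven K) (c : ℕ → K) : 7 * covGCoeff c 6 =
    3 * c 2 * c 8 - 4 * c 3 * c 7 - 11 * c 4 * c 6 + 12 * c 5 ^ 2 :=
  mul_div_cancel₀ _ H.seven_ne_zero

lemma exists_parametrisation_of_tail_eq_zero (H : CharGtSeven K) {c : ℕ → K}
    (h1 : covKCoeff c 1 = 0) (h3 : covKCoeff c 3 = 0) (h4 : covKCoeff c 4 = 0)
    (c6 : c 6 = 0) (c7 : c 7 ≠ 0) (c8 : c 8 = 0) :
    ∃ u b, c 0 = 6 * b * u ^ 2 * c 7 ∧ c 2 = -3 * b * u * c 7 ∧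
      c 3 = -15 * u ^ 2 * c 7 ∧ c 4 = b * c 7 ∧ c 5 = 3 * u * c 7 := by
  have n2 := H.two_ne_zero
  have n3 := H.three_ne_zero
  obtain ⟨u, hu⟩ : ∃ u, c 5 = 3 * u * c 7 := ⟨c 5 / (3 * c 7), by field_simp⟩
  obtain ⟨b, hb⟩ : ∃ b, c 4 = b * c 7 := ⟨c 4 / c 7, by field_simp⟩
  simp only [covKCoeff, hu, hb, c6, c8] at h1 h3 h4
  have hc3 : c 3 = -15 * u ^ 2 * c 7 := by
    apply mul_left_cancel₀ (mul_ne_zero (mul_ne_zero (pow_ne_zero 2 n2) n3) c7)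
    linear_combination -h4
  have hc2 : c 2 = -3 * b * u * c 7 := by
    apply mul_left_cancel₀ (mul_ne_zero H.five_ne_zero c7)
    linear_combination -h3
  refine ⟨u, b, ?_, hc2, hc3, hb, hu⟩
  apply mul_left_cancel₀ c7
  rw [hc2, hc3] at h1
  linear_combination h1

section NonzeroMiddle

variable (H : CharGtSeven K) {c : ℕ → K} (h1 : covKCoeff c 1 = 0) (h3 : covKCoeff c 3 = 0)
  (h4 : covKCoeff c 4 = 0) (h2 : covKCoeff c 2 ≠ 0)
  (hrel : SatisfiesD8Relations (binaryForm 8 c))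
include H h1 h3 h4 h2 hrel

lemma covKCoeff_zero_sq_mul_eight : covKCoeff c 0 ^ 2 * c 8 = 0 := by
  have h4' := shJ4_of_covKCoeff_eq_zero H h1 h3 h4
  have h6' := shJ6_of_covKCoeff_eq_zero H h1 h3 h4
  apply mul_left_cancel₀ (mul_ne_zero (pow_ne_zero 2 H.three_ne_zero) (pow_ne_zero 2 h2))
  linear_combination j9_of_d8rel H hrel h2 h4' h6' - shJ9_of_covKCoeff_eq_zero H h1 h3 h4 +
    2 * covKCoeff c 2 * (j7_of_d8rel H hrel h2 h4' h6' - shJ7_of_covKCoeff_eq_zero H h1 h3 h4) -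
    covKCoeff c 2 ^ 2 * shJ5_of_covKCoeff_eq_zero H h1 h3 h4

lemma covKCoeff_zero_mul_six : covKCoeff c 0 * c 6 = 0 := by
  have h7' := j7_of_d8rel H hrel h2 (shJ4_of_covKCoeff_eq_zero H h1 h3 h4)
    (shJ6_of_covKCoeff_eq_zero H h1 h3 h4)
  apply mul_left_cancel₀ (mul_ne_zero (mul_ne_zero H.two_ne_zero (pow_ne_zero 2 H.three_ne_zero))
    (pow_ne_zero 2 h2))
  linear_combination h7' - shJ7_of_covKCoeff_eq_zero H h1 h3 h4 -
    covKCoeff c 2 * shJ5_of_covKCoeff_eq_zero H h1 h3 h4 -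
    3 * covKCoeff c 2 * covKCoeff_zero_sq_mul_eight H h1 h3 h4 h2 hrel

lemma shJ5_of_d8Relations : shJ5 (binaryForm 8 c) = 36 * covKCoeff c 2 ^ 2 * c 4 := by
  linear_combination shJ5_of_covKCoeff_eq_zero H h1 h3 h4 +
    covKCoeff_zero_sq_mul_eight H h1 h3 h4 h2 hrel +
    12 * covKCoeff c 2 * covKCoeff_zero_mul_six H h1 h3 h4 h2 hrel

lemma shJ2_of_d8Relations : shJ2 (binaryForm 8 c) = 6 * covKCoeff c 2 + 120 * c 4 ^ 2 := by
  have h := j5_sq_of_d8rel H hrel (shJ4_of_covKCoeff_eq_zero H h1 h3 h4)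
    (shJ6_of_covKCoeff_eq_zero H h1 h3 h4)
  rw [shJ5_of_d8Relations H h1 h3 h4 h2 hrel] at h
  apply mul_left_cancel₀ (mul_ne_zero (mul_ne_zero H.two_ne_zero (pow_ne_zero 3 H.three_ne_zero))
    (pow_ne_zero 4 h2))
  linear_combination -h

lemma shJ3_of_d8Relations :
    shJ3 (binaryForm 8 c) = 6 * c 4 * (3 * covKCoeff c 2 + 40 * c 4 ^ 2) := by
  have h := j5_mul_of_d8rel H hrel h2 (shJ4_of_covKCoeff_eq_zero H h1 h3 h4)
    (shJ6_of_covKCoeff_eq_zero H h1 h3 h4)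
  rw [shJ5_of_d8Relations H h1 h3 h4 h2 hrel, shJ2_of_d8Relations H h1 h3 h4 h2 hrel] at h
  apply mul_left_cancel₀ (mul_ne_zero (mul_ne_zero H.two_ne_zero (pow_ne_zero 2 H.three_ne_zero))
    (pow_ne_zero 2 h2))
  linear_combination -h

lemma thirtyfive_mul_shJ8_of_d8Relations : 35 * shJ8 (binaryForm 8 c) =
    -108 * covKCoeff c 2 ^ 4 - 2520 * covKCoeff c 2 ^ 3 * c 4 ^ 2 := by
  rw [j8_of_d8rel H hrel (shJ4_of_covKCoeff_eq_zero H h1 h3 h4)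
    (shJ6_of_covKCoeff_eq_zero H h1 h3 h4), shJ2_of_d8Relations H h1 h3 h4 h2 hrel]
  ring

lemma isAdapted_of_d8Relations (h0 : covKCoeff c 0 = 0) : IsAdapted c := by
  have hJ2 := shJ2_of_d8Relations H h1 h3 h4 h2 hrel
  have hJ3 := shJ3_of_d8Relations H h1 h3 h4 h2 hrel
  have hJ8 := thirtyfive_mul_shJ8_of_d8Relations H h1 h3 h4 h2 hrel
  rw [shJ2_binaryForm H] at hJ2
  rw [shJ3_binaryForm H] at hJ3
  rw [shJ8_of_covKCoeff_eq_zero H h1 h3 h4, h0] at hJ8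
  have hmid := three_mul_covKCoeff_two H c
  have n2 := H.two_ne_zero
  have n3 := H.three_ne_zero
  have hcov4 : 35 * covGCoeff c 4 = 3 * covKCoeff c 2 + 70 * c 4 ^ 2 := by
    apply mul_left_cancel₀ (mul_ne_zero (mul_ne_zero (pow_ne_zero 2 n2) (pow_ne_zero 2 n3))
      (pow_ne_zero 3 h2))
    linear_combination -hJ8
  rw [thirtyfive_mul_covGCoeff_four H] at hcov4
  have h17 : c 1 * c 7 = c 2 * c 6 + 5 * (c 3 * c 5) := by
    apply mul_left_cancel₀ (mul_ne_zero n2 H.seven_ne_zero)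
    linear_combination hcov4 + hmid
  have h26 : c 2 * c 6 = 4 * (c 3 * c 5) := by
    apply mul_left_cancel₀ (mul_ne_zero (pow_ne_zero 2 n2) (mul_ne_zero n3 H.five_ne_zero))
    linear_combination hJ2 + 2 * hmid + 12 * h17
  exact {
    cov_zero := (mul_eq_zero.1 h0).resolve_left n2
    cov_one := h1
    cov_three := h3
    cov_four := (mul_eq_zero.1 h4).resolve_left n2
    mul_one_seven := by linear_combination h17 + h26
    mul_two_six := h26
    cubic := by
      apply mul_left_cancel₀ (mul_ne_zero n2 n3)
      linear_combination hJ3 + 6 * c 4 * hmid - 84 * c 4 * h17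
    cov_two_ne_zero := fun h => mul_ne_zero n3 h2 (by
      linear_combination hmid + h - 2 * h17 - 10 * h26) }

lemma exists_parametrisation_of_covKCoeff_zero_ne_zero (hsq : Squarefree (binaryForm 8 c))
    (h0 : covKCoeff c 0 ≠ 0) : c 7 ≠ 0 ∧ ∃ u ≠ 0, c 1 = 675 * u ^ 3 * c 7 ∧ c 2 = 0 ∧
      c 3 = -15 * u ^ 2 * c 7 ∧ c 4 = 0 ∧ c 5 = 3 * u * c 7 ∧ c 6 = 0 ∧ c 8 = 0 := by
  have n2 := H.two_ne_zero
  have n3 := H.three_ne_zero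
  have c6 : c 6 = 0 :=
    (mul_eq_zero.1 (covKCoeff_zero_mul_six H h1 h3 h4 h2 hrel)).resolve_left h0
  have c8 : c 8 = 0 :=
    (mul_eq_zero.1 (covKCoeff_zero_sq_mul_eight H h1 h3 h4 h2 hrel)).resolve_left
      (pow_ne_zero 2 h0)
  have c7 : c 7 ≠ 0 := penultimate_ne_zero_of_squarefree hsq c8
  obtain ⟨u, b, hc0, hc2, hc3, hc4, hc5⟩ :=
    exists_parametrisation_of_tail_eq_zero H h1 h3 h4 c6 c7 c8
  have hmid := three_mul_covKCoeff_two H c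
  have hJ2 := shJ2_of_d8Relations H h1 h3 h4 h2 hrel
  have hJ3 := shJ3_of_d8Relations H h1 h3 h4 h2 hrel
  rw [shJ2_binaryForm H, c6, c8, hc3, hc4, hc5] at hJ2
  rw [shJ3_binaryForm H, c6, c8, hc0, hc2, hc3, hc4, hc5] at hJ3
  rw [c6, c8, hc3, hc4, hc5] at hmid
  have hc1 : c 1 = 675 * u ^ 3 * c 7 := by
    apply mul_left_cancel₀ (mul_ne_zero (mul_ne_zero (pow_ne_zero 2 n2) n3) c7)
    linear_combination -hJ2 - 2 * hmid
  rw [hc1] at hJ3 hmid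
  have hbu : b * u ^ 3 = 0 := by
    apply mul_left_cancel₀ (mul_ne_zero (mul_ne_zero (pow_ne_zero 9 n2) (pow_ne_zero 3 n3))
      (mul_ne_zero H.five_ne_zero (pow_ne_zero 3 c7)))
    linear_combination hJ3 + 6 * b * c 7 * hmid
  have hu : u ≠ 0 := by
    rintro rfl
    apply h0
    rw [covKCoeff, c6, hc2, hc3, hc5]
    ring
  obtain rfl : b = 0 := (mul_eq_zero.1 hbu).resolve_right (pow_ne_zero 3 hu)
  exact ⟨c7, u, hu, hc1, by rw [hc2]; ring, hc3, by rw [hc4, zero_mul], hc5, c6, c8⟩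

lemma covKCoeff_zero_eq_zero (hsq : Squarefree (binaryForm 8 c)) : covKCoeff c 0 = 0 := by
  by_contra h0
  obtain ⟨c7, u, hu, hc1, hc2, hc3, hc4, hc5, c6, c8⟩ :=
    exists_parametrisation_of_covKCoeff_zero_ne_zero H h1 h3 h4 h2 hrel hsq h0
  have hcov0 : covKCoeff c 0 = -28800 * u ^ 4 * c 7 ^ 2 := by
    rw [covKCoeff, hc1, hc2, hc3, hc5, c6]
    ring
  have hcov2 : covKCoeff c 2 = -960 * u ^ 3 * c 7 ^ 2 := by
    apply mul_left_cancel₀ H.three_ne_zero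
    rw [three_mul_covKCoeff_two H, hc1, hc2, hc3, hc4, hc5, c8]
    ring
  have hG6 : covGCoeff c 6 = 24 * u ^ 2 * c 7 ^ 2 := by
    apply mul_left_cancel₀ H.seven_ne_zero
    rw [seven_mul_covGCoeff_six H, hc3, hc5, c6, c8]
    ring
  have hG4 : 35 * covGCoeff c 4 = 9720 * u ^ 3 * c 7 ^ 2 := by
    rw [thirtyfive_mul_covGCoeff_four H, hc1, hc2, hc3, hc4, hc5, c8]
    ring
  have hG8 : covGCoeff c 8 = -24 * u * c 7 ^ 2 := by
    rw [covGCoeff, hc5, c6, c8]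
    ring
  have hJ8 := thirtyfive_mul_shJ8_of_d8Relations H h1 h3 h4 h2 hrel
  rw [shJ8_of_covKCoeff_eq_zero H h1 h3 h4, hcov0, hcov2, hG6, hG8, hc4] at hJ8
  have hne : (2 ^ 25 * 3 ^ 7 * 5 ^ 5 * 7 : K) ≠ 0 :=
    mul_ne_zero (mul_ne_zero (mul_ne_zero (pow_ne_zero _ H.two_ne_zero)
      (pow_ne_zero _ H.three_ne_zero)) (pow_ne_zero _ H.five_ne_zero)) H.seven_ne_zero
  apply mul_ne_zero hne (mul_ne_zero (pow_ne_zero 12 hu) (pow_ne_zero 8 c7))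
  linear_combination hJ8 + 36 * (-960 * u ^ 3 * c 7 ^ 2) ^ 3 * hG4

theorem exists_glEquiv_d8Octic_of_covKCoeff_two_ne_zero [IsAlgClosed K]
    (hsq : Squarefree (binaryForm 8 c)) : ∃ a, GLEquiv (binaryForm 8 c) (d8Octic a 1) := by
  have h0 := covKCoeff_zero_eq_zero H h1 h3 h4 h2 hrel hsq
  obtain ⟨c1, c2, c3, c5, c6, c7⟩ :=
    (isAdapted_of_d8Relations H h1 h3 h4 h2 hrel h0).off_diagonal_eq_zero H
      (second_ne_zero_of_squarefree hsq) (penultimate_ne_zero_of_squarefree hsq)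
  exact exists_glEquiv_d8Octic_of_diagonal hsq c1 c2 c3 c5 c6 c7

end NonzeroMiddle

/-! ### Octics with `𝔨` a multiple of `X³Z` or `X⁴` -/

lemma false_of_covKCoeff_one_ne_zero (H : CharGtSeven K) {c : ℕ → K}
    (hsq : Squarefree (binaryForm 8 c)) (hrel : SatisfiesD8Relations (binaryForm 8 c))
    (h0 : covKCoeff c 0 = 0) (h2 : covKCoeff c 2 = 0) (h3 : covKCoeff c 3 = 0)
    (h4 : covKCoeff c 4 = 0) (h1 : covKCoeff c 1 ≠ 0) : False := by
  have hH0 : hessianCoeff (covKCoeff c) 0 = -2 * covKCoeff c 1 ^ 2 := by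
    rw [hessianCoeff, h0]
    ring
  have hH (i : ℕ) (hi : i ≠ 0) : hessianCoeff (covKCoeff c) i = 0 := by
    rcases i with _ | _ | _ | _ | _ | i <;> simp_all [hessianCoeff]
  obtain ⟨-, hJ7, hJ9, -⟩ := d8rel_of_j4_eq_zero H hrel
    (by rw [shJ4_binaryForm H, quarticPairing, h0, h2, h3, h4]; ring)
  simp only [shJ7_binaryForm H, quarticPairing, contractCoeff, hH0, hH 1 one_ne_zero,
    hH 2 two_ne_zero, hH 3 three_ne_zero, hH 4 four_ne_zero, h0, h2, h3, h4] at hJ7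
  simp only [shJ9_binaryForm H, quarticPairing, contractCoeff, hH0, hH 1 one_ne_zero,
    hH 2 two_ne_zero, hH 3 three_ne_zero, hH 4 four_ne_zero] at hJ9
  have c8 : c 8 = 0 := by
    apply mul_left_cancel₀ (mul_ne_zero (pow_ne_zero 2 H.two_ne_zero) (pow_ne_zero 4 h1))
    linear_combination hJ9
  apply penultimate_ne_zero_of_squarefree hsq c8
  apply mul_left_cancel₀ (mul_ne_zero (pow_ne_zero 3 H.two_ne_zero) (pow_ne_zero 3 h1))
  linear_combination hJ7

lemma covKCoeff_shearCoeff (H : CharGtSeven K) (t : K) (c : ℕ → K) {i : ℕ} (hi : i ≤ 4) :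
    covKCoeff (shearCoeff 8 t c) i = shearCoeff 4 t (covKCoeff c) i := by
  refine binaryForm_injOn H.factorial_four_ne_zero ?_ hi
  rw [← covK_binaryForm H, ← linSubst_shear_binaryForm, isCovariant_covK, covK_binaryForm H,
    linSubst_shear_binaryForm, Matrix.det_fin_two_of]
  simp only [mul_one, zero_mul, sub_zero, one_pow, one_smul]

lemma covKCoeff_eq_zero_of_glEquiv (H : CharGtSeven K) {c d : ℕ → K}
    (h : GLEquiv (binaryForm 8 d) (binaryForm 8 c)) (hc : ∀ i ≤ 4, covKCoeff c i = 0) {i : ℕ}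
    (hi : i ≤ 4) : covKCoeff d i = 0 := by
  obtain ⟨M, -, hM⟩ := h
  have hzero : binaryForm 4 (covKCoeff c) = 0 :=
    Finset.sum_eq_zero fun j hj => by
      rw [hc j (Finset.mem_range_succ_iff.1 hj), mul_zero, C_0, zero_mul]
  refine binaryForm_injOn (d := fun _ => 0) H.factorial_four_ne_zero ?_ hi
  rw [← covK_binaryForm H, hM, isCovariant_covK, covK_binaryForm H, hzero, map_zero, smul_zero]
  simp [binaryForm]

lemma cube_vertices_identity {R : Type*} [CommRing R] {r : R} (hr : r ^ 2 = 3) (P Q : R) :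
    8 * ((1 + r) * P + (1 - r) * Q) ^ 7 * (2 * (P + Q)) +
        7 * ((1 + r) * P + (1 - r) * Q) ^ 4 * (2 * (P + Q)) ^ 4 -
        ((1 + r) * P + (1 - r) * Q) * (2 * (P + Q)) ^ 7 =
      16 * (756 * (P ^ 4 - Q ^ 4) ^ 2 + 432 * r * (P ^ 8 - Q ^ 8)) := by
  have hsym (x D : R) : 8 * (x + r * D) ^ 7 * (2 * x) + 7 * (x + r * D) ^ 4 * (2 * x) ^ 4 -
      (x + r * D) * (2 * x) ^ 7 = 16 * (189 * x ^ 2 * D ^ 2 * (x ^ 2 + D ^ 2) ^ 2 +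
        27 * r * x * D * (x ^ 6 + 7 * x ^ 4 * D ^ 2 + 7 * x ^ 2 * D ^ 4 + D ^ 6)) := by
    linear_combination (16 * x * (63 * x ^ 5 * D ^ 2 + 63 * x ^ 4 * r * D ^ 3 +
      (42 * x ^ 3 * D ^ 4 + 21 * x ^ 2 * r * D ^ 5) * (r ^ 2 + 3) +
      (7 * x * D ^ 6 + r * D ^ 7) * (r ^ 4 + 3 * r ^ 2 + 9))) * hr
  linear_combination hsym (P + Q) (P - Q)

lemma linSubst_cube (H : CharGtSeven K) {r s : K} (hr : r ^ 2 = 3) {c : ℕ → K} (c0 : c 0 = 0)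
    (c2 : c 2 = 0) (c3 : c 3 = 0) (c5 : c 5 = 0) (c6 : c 6 = 0) (c8 : c 8 = 0)
    (h1 : c 1 * s ^ 6 = -8 * c 7) (h4 : 5 * c 4 * s ^ 3 = -4 * c 7) :
    ∃ d : ℕ → K, linSubst !![s * (1 + r), s * (1 - r); 2, 2] (binaryForm 8 c) = binaryForm 8 d ∧
      d 1 = 0 ∧ d 2 = 0 ∧ d 3 = 0 ∧ d 5 = 0 ∧ d 6 = 0 ∧ d 7 = 0 := by
  obtain ⟨m, hm⟩ : ∃ m, 70 * m = -8 * c 7 * s * 16 * (-1512) :=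
    ⟨_, mul_div_cancel₀ _ H.seventy_ne_zero⟩
  let d : ℕ → K
    | 0 => -8 * c 7 * s * 16 * (756 + 432 * r)
    | 4 => m
    | 8 => -8 * c 7 * s * 16 * (756 - 432 * r)
    | _ => 0
  refine ⟨d, ?_, rfl, rfl, rfl, rfl, rfl, rfl⟩
  have hr' := congrArg (C (σ := Fin 2)) hr
  have hm' := congrArg (C (σ := Fin 2)) hm
  have h1' := congrArg (C (σ := Fin 2)) h1
  have h4' := congrArg (C (σ := Fin 2)) h4
  rw [binaryForm_eight, binaryForm_eight, c0, c2, c3, c5, c6, c8]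
  simp only [map_ofNat, neg_mul, mul_neg, neg_neg, C_neg, C_0, C_1, zero_mul,
    zero_add, mul_zero, add_zero, map_add, map_mul, map_pow, C_sub, linSubst_X, algHom_C,
    algebraMap_eq, Matrix.of_apply, Matrix.cons_val', Matrix.cons_val_zero,
    Matrix.cons_val_fin_one, Matrix.cons_val_one, d] at hr' hm' h1' h4' ⊢
  set p : MvPolynomial (Fin 2) K := (1 + C r) * X 0 + (1 - C r) * X 1
  set q : MvPolynomial (Fin 2) K := 2 * (X 0 + X 1)
  linear_combination 8 * C s * p ^ 7 * q * h1' + 14 * C s * p ^ 4 * q ^ 4 * h4' -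
    8 * C (c 7) * C s * cube_vertices_identity hr' (X 0) (X 1) - X 0 ^ 4 * X 1 ^ 4 * hm'

-- The roots are the vertices of a cube, seen along a diagonal; `linSubst_cube` turns the cube
-- so that a fourfold axis becomes vertical.
lemma exists_glEquiv_d8Octic_of_cube [IsAlgClosed K] (H : CharGtSeven K) {c : ℕ → K}
    (hsq : Squarefree (binaryForm 8 c)) (c0 : c 0 = 0) (c2 : c 2 = 0) (c3 : c 3 = 0)
    (c5 : c 5 = 0) (c6 : c 6 = 0) (c8 : c 8 = 0) (h : 2 * c 1 * c 7 = -25 * c 4 ^ 2) :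
    ∃ a, GLEquiv (binaryForm 8 c) (d8Octic a 1) := by
  have n2 := H.two_ne_zero
  have n3 := H.three_ne_zero
  have n5 := H.five_ne_zero
  have c1 := second_ne_zero_of_squarefree hsq c0
  have c7 := penultimate_ne_zero_of_squarefree hsq c8
  have c4 : c 4 ≠ 0 := fun c4 => mul_ne_zero (mul_ne_zero n2 c1) c7 (by rw [h, c4]; ring)
  obtain ⟨r, hr⟩ := IsAlgClosed.exists_pow_nat_eq (3 : K) (n := 2) two_pos
  obtain ⟨s, hs⟩ := IsAlgClosed.exists_pow_nat_eq (-4 * c 7 / (5 * c 4)) (n := 3) three_pos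
  have h4 : 5 * c 4 * s ^ 3 = -4 * c 7 := by
    rw [hs]
    field_simp
  have h1 : c 1 * s ^ 6 = -8 * c 7 := by
    apply mul_left_cancel₀ (mul_ne_zero (pow_ne_zero 2 n5) (pow_ne_zero 2 c4))
    linear_combination c 1 * (5 * c 4 * s ^ 3 - 4 * c 7) * h4 + 8 * c 7 * h
  have hM : IsUnit (!![s * (1 + r), s * (1 - r); 2, 2] : Matrix (Fin 2) (Fin 2) K).det := by
    have hr0 : r ≠ 0 := by
      rintro rfl
      exact n3 (by rw [← hr]; ring)
    have hs0 : s ≠ 0 := by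
      rintro rfl
      exact mul_ne_zero (pow_ne_zero 2 n2) c7 (by linear_combination h4)
    rw [Matrix.det_fin_two_of, isUnit_iff_ne_zero]
    convert mul_ne_zero (mul_ne_zero (pow_ne_zero 2 n2) hs0) hr0 using 1
    ring
  obtain ⟨d, hd, d1, d2, d3, d5, d6, d7⟩ := linSubst_cube H hr c0 c2 c3 c5 c6 c8 h1 h4
  have hdc : GLEquiv (binaryForm 8 d) (binaryForm 8 c) := ⟨_, hM, hd.symm⟩
  obtain ⟨a, ha⟩ := exists_glEquiv_d8Octic_of_diagonal (hdc.squarefree hsq) d1 d2 d3 d5 d6 d7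
  exact ⟨a, hdc.symm.trans ha⟩

-- The octic is `8v * X * (tX + Z)⁶ * (Z - 6tX)`.
lemma not_squarefree_of_sextuple_root {t v : K} {c : ℕ → K} (c0 : c 0 = -48 * t ^ 7 * v)
    (c1 : c 1 = -35 * t ^ 6 * v) (c2 : c 2 = -24 * t ^ 5 * v) (c3 : c 3 = -15 * t ^ 4 * v)
    (c4 : c 4 = -8 * t ^ 3 * v) (c5 : c 5 = -3 * t ^ 2 * v) (c6 : c 6 = 0) (c7 : c 7 = v)
    (c8 : c 8 = 0) : ¬ Squarefree (binaryForm 8 c) := fun hsq => by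
  have hunit : IsUnit (C t * X 0 + X 1 : MvPolynomial (Fin 2) K) := by
    refine hsq _ ⟨8 * C v * X 0 * (C t * X 0 + X 1) ^ 4 * (X 1 - 6 * C t * X 0), ?_⟩
    rw [binaryForm_eight, c0, c1, c2, c3, c4, c5, c6, c7, c8]
    simp only [C_mul, C_neg, C_pow, C_0, map_ofNat]
    ring
  simpa using hunit.map (constantCoeff (R := K))

lemma exists_parametrisation_of_covKCoeff_eq_zero (H : CharGtSeven K) {c : ℕ → K}
    (hrel : SatisfiesD8Relations (binaryForm 8 c)) (hk : ∀ i ∈ Finset.Icc 1 4, covKCoeff c i = 0)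
    (c6 : c 6 = 0) (c7 : c 7 ≠ 0) (c8 : c 8 = 0) :
    ∃ u b, u ^ 3 * (16 * u ^ 3 + b ^ 2) ^ 2 = 0 ∧ c 0 = 12 * b * u ^ 2 * c 7 ∧
      c 1 = (-765 * u ^ 3 - 50 * b ^ 2) * c 7 ∧ c 2 = -6 * b * u * c 7 ∧
      c 3 = -15 * u ^ 2 * c 7 ∧ c 4 = 2 * b * c 7 ∧ c 5 = 3 * u * c 7 := by
  have n2 := H.two_ne_zero
  have h1 := hk 1 (by decide)
  have h2 := hk 2 (by decide)
  have h3 := hk 3 (by decide)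
  have h4 := hk 4 (by decide)
  obtain ⟨u, b', c0, c2, c3, c4, c5⟩ := exists_parametrisation_of_tail_eq_zero H h1 h3 h4 c6 c7 c8
  obtain ⟨b, rfl⟩ : ∃ b, b' = 2 * b := ⟨b' / 2, (mul_div_cancel₀ _ n2).symm⟩
  have c1 : c 1 = (-765 * u ^ 3 - 50 * b ^ 2) * c 7 := by
    apply mul_left_cancel₀ (mul_ne_zero n2 c7)
    have := three_mul_covKCoeff_two H c
    rw [h2, c3, c4, c5, c6, c8] at this
    linear_combination this
  refine ⟨u, b, ?_, by rw [c0]; ring, c1, by rw [c2]; ring, c3, c4, c5⟩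
  obtain ⟨-, -, -, hJ⟩ := d8rel_of_j4_eq_zero H hrel
    (by rw [shJ4_binaryForm H, quarticPairing, h1, h2, h3, h4]; ring)
  rw [shJ2_binaryForm H, shJ3_binaryForm H, c0, c1, c2, c3, c4, c5, c6, c8] at hJ
  have n1080 : (2 ^ 3 * 3 ^ 3 * 5 : K) ≠ 0 :=
    mul_ne_zero (mul_ne_zero (pow_ne_zero 3 n2) (pow_ne_zero 3 H.three_ne_zero)) H.five_ne_zero
  apply mul_left_cancel₀ (mul_ne_zero (mul_ne_zero (pow_ne_zero 4 n2) (pow_ne_zero 3 n1080))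
    (pow_ne_zero 6 c7))
  linear_combination -hJ

lemma exists_glEquiv_d8Octic_of_tail_eq_zero [IsAlgClosed K] (H : CharGtSeven K) {c : ℕ → K}
    (hsq : Squarefree (binaryForm 8 c)) (hrel : SatisfiesD8Relations (binaryForm 8 c))
    (hk : ∀ i ∈ Finset.Icc 1 4, covKCoeff c i = 0) (c6 : c 6 = 0) (c8 : c 8 = 0) :
    ∃ a, GLEquiv (binaryForm 8 c) (d8Octic a 1) := by
  obtain ⟨u, b, hub, c0, c1, c2, c3, c4, c5⟩ := exists_parametrisation_of_covKCoeff_eq_zero H hrel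
    hk c6 (penultimate_ne_zero_of_squarefree hsq c8) c8
  by_cases hu : u = 0
  · subst hu
    refine exists_glEquiv_d8Octic_of_cube H hsq ?_ ?_ ?_ ?_ c6 c8 ?_ <;>
      simp only [c0, c1, c2, c3, c4, c5] <;> ring
  · have n4 : (2 ^ 2 : K) ≠ 0 := pow_ne_zero 2 H.two_ne_zero
    have hub' : 16 * u ^ 3 + b ^ 2 = 0 :=
      pow_eq_zero_iff two_ne_zero |>.1 ((mul_eq_zero_iff_left (pow_ne_zero 3 hu)).1 hub)
    obtain ⟨t, rfl⟩ : ∃ t, b = 2 ^ 2 * u * t := 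
      ⟨_, (mul_div_cancel₀ _ (mul_ne_zero n4 hu)).symm⟩
    obtain rfl : u = -t ^ 2 := by
      apply mul_left_cancel₀ (mul_ne_zero (pow_ne_zero 2 n4) (pow_ne_zero 2 hu))
      linear_combination hub'
    refine absurd hsq (not_squarefree_of_sextuple_root (t := t) (v := c 7)
      ?_ ?_ ?_ ?_ ?_ ?_ c6 rfl c8) <;>
      simp only [c0, c1, c2, c3, c4, c5] <;> ring

lemma exists_glEquiv_d8Octic_of_last_eq_zero [IsAlgClosed K] (H : CharGtSeven K) {c : ℕ → K}
    (hsq : Squarefree (binaryForm 8 c)) (hrel : SatisfiesD8Relations (binaryForm 8 c))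
    (hk : ∀ i ∈ Finset.Icc 1 4, covKCoeff c i = 0) (c8 : c 8 = 0) :
    ∃ a, GLEquiv (binaryForm 8 c) (d8Octic a 1) := by
  have n2 := H.two_ne_zero
  have c7 := penultimate_ne_zero_of_squarefree hsq c8
  set t := -c 6 / (2 * c 7) with ht
  have hdc := glEquiv_shear 8 t c
  have hd (i : ℕ) (hi : i ∈ Finset.Icc 1 4) : covKCoeff (shearCoeff 8 t c) i = 0 := by
    obtain ⟨-, s1, s2, s3, s4⟩ := shearCoeff_four t (covKCoeff c)
    simp only [hk 1 (by decide), hk 2 (by decide), hk 3 (by decide), hk 4 (by decide), mul_zero,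
      add_zero] at s1 s2 s3 s4
    rw [covKCoeff_shearCoeff H t c (Finset.mem_Icc.1 hi).2]
    fin_cases hi <;> assumption
  have d6 : shearCoeff 8 t c 6 = 0 := by
    simp only [shearCoeff, Nat.reduceSub, ht, Finset.sum_range_succ, Finset.range_one,
      Finset.sum_singleton, Nat.choose_zero_right, Nat.cast_one, pow_zero, mul_one, one_mul,
      Nat.choose_succ_self_right, Nat.cast_ofNat, pow_one, Nat.choose_self, Nat.reduceAdd,
      add_zero, c8, mul_zero]
    field_simp
    ring
  obtain ⟨a, ha⟩ := exists_glEquiv_d8Octic_of_tail_eq_zero H (hdc.squarefree hsq)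
    (hrel.of_glEquiv hdc) hd d6 (by simp [shearCoeff, c8])
  exact ⟨a, hdc.symm.trans ha⟩

theorem exists_glEquiv_d8Octic_of_covKCoeff_eq_zero [IsAlgClosed K] (H : CharGtSeven K)
    {c : ℕ → K} (hsq : Squarefree (binaryForm 8 c)) (hrel : SatisfiesD8Relations (binaryForm 8 c))
    (hk : ∀ i ∈ Finset.Icc 1 4, covKCoeff c i = 0) :
    ∃ a, GLEquiv (binaryForm 8 c) (d8Octic a 1) := by
  have h1 := hk 1 (by decide)
  have h2 := hk 2 (by decide)
  have h3 := hk 3 (by decide)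
  have h4 := hk 4 (by decide)
  by_cases h0 : covKCoeff c 0 = 0
  · obtain ⟨d, hdc, d8⟩ := exists_glEquiv_last_eq_zero (n := 8) (by decide) c
    have hzero : ∀ i ≤ 4, covKCoeff c i = 0 := fun i hi => by
      interval_cases i <;> assumption
    obtain ⟨a, ha⟩ := exists_glEquiv_d8Octic_of_last_eq_zero H (hdc.squarefree hsq)
      (hrel.of_glEquiv hdc)
      (fun i hi => covKCoeff_eq_zero_of_glEquiv H hdc hzero (Finset.mem_Icc.1 hi).2) d8
    exact ⟨a, hdc.symm.trans ha⟩
  · refine exists_glEquiv_d8Octic_of_last_eq_zero H hsq hrel hk ?_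
    obtain ⟨hJ5, -⟩ := d8rel_of_j4_eq_zero H hrel
      (by rw [shJ4_binaryForm H, quarticPairing, h1, h2, h3, h4]; ring)
    rw [shJ5_of_covKCoeff_eq_zero H h1 h3 h4, h2] at hJ5
    apply mul_left_cancel₀ (pow_ne_zero 2 h0)
    linear_combination hJ5

theorem exists_glEquiv_d8Octic_of_satisfiesD8Relations [IsAlgClosed K] (H : CharGtSeven K)
    {f : MvPolynomial (Fin 2) K} (hf : f.IsHomogeneous 8) (hsq : Squarefree f)
    (hrel : SatisfiesD8Relations f) : ∃ a, GLEquiv f (d8Octic a 1) := by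
  obtain ⟨c, rfl⟩ := exists_eq_binaryForm H.factorial_eight_ne_zero hf
  have hdeg := isDegenerateQuartic_covK H hrel
  rw [covK_binaryForm H] at hdeg
  obtain ⟨l, hl, l3, l4, hcases⟩ := exists_glEquiv_quartic_normalForm H hdeg
  rw [← covK_binaryForm H] at hl
  obtain ⟨d, hdc, u, hu, hdl⟩ := exists_glEquiv_of_covK H hl
  have hsq' := hdc.squarefree hsq
  have hrel' := hrel.of_glEquiv hdc
  have h0 := hdl 0 (by decide)
  have h1 := hdl 1 (by decide)
  have h2 := hdl 2 (by decide)
  have h3 : covKCoeff d 3 = 0 := by rw [hdl 3 (by decide), l3, mul_zero]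
  have h4 : covKCoeff d 4 = 0 := by rw [hdl 4 (by decide), l4, mul_zero]
  suffices ∃ a, GLEquiv (binaryForm 8 d) (d8Octic a 1) from this.imp fun a => hdc.symm.trans
  rcases hcases with l1 | ⟨l0, l1, l2⟩
  · rw [l1, mul_zero] at h1
    by_cases h2' : covKCoeff d 2 = 0
    · refine exists_glEquiv_d8Octic_of_covKCoeff_eq_zero H hsq' hrel' fun i hi => ?_
      fin_cases hi <;> assumption
    · exact exists_glEquiv_d8Octic_of_covKCoeff_two_ne_zero H h1 h3 h4 h2' hrel' hsq'
  · rw [l0, mul_zero] at h0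
    rw [l2, mul_zero] at h2
    exact (false_of_covKCoeff_one_ne_zero H hsq' hrel' h0 h2 h3 h4
      (h1 ▸ mul_ne_zero hu l1)).elim

end BinaryOctic

/-- Identification of and reconstruction in the stratum `C₂ × D₈`: a squarefree binary octic
`f` over an algebraically closed field of characteristic `0` or `≥ 11` is
`GL₂(K)`-equivalent to some `X⁸ + a·X⁴Z⁴ + Z⁸` (i.e. the automorphism group of the genus-3
curve `y² = f(x,1)` contains `C₂ × D₈`) iff its Shioda invariants satisfy the nine relations
of `D8rel`.  Moreover, in that case `f` is `GL₂(K)`-equivalent to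
`X⁸ + a₄·X⁴Z⁴ + a₀·Z⁸` with `a₀ = −a₄²/140 + j₂/2` and
`a₄ = 35·(j₅j₂+6j₄j₃)/(2j₂³−60j₃²)` if `30·j₃² ≠ j₂³`, while `a₄ = 35·j₅/(3·j₄)` if
`30·j₃² = j₂³` and `j₄ ≠ 0`. -/
theorem statement19 {K : Type*} [Field K] [IsAlgClosed K]
    (hchar : ringChar K = 0 ∨ 11 ≤ ringChar K)
    (f : MvPolynomial (Fin 2) K) (hf : f.IsHomogeneous 8) (hsf : Squarefree f) :
    ((∃ (a : K) (M : Matrix (Fin 2) (Fin 2) K), IsUnit M.det ∧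
        f = bind₁ (fun j : Fin 2 => C (M j 0) * X 0 + C (M j 1) * X 1)
          (X 0 ^ 8 + C a * X 0 ^ 4 * X 1 ^ 4 + X 1 ^ 8)) ↔
      D8rel (shJ2 f) (shJ3 f) (shJ4 f) (shJ5 f) (shJ6 f) (shJ7 f) (shJ8 f) (shJ9 f)
        (shJ10 f)) ∧
    (D8rel (shJ2 f) (shJ3 f) (shJ4 f) (shJ5 f) (shJ6 f) (shJ7 f) (shJ8 f) (shJ9 f)
        (shJ10 f) →
      (30 * shJ3 f ^ 2 ≠ shJ2 f ^ 3 →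
        ∃ M : Matrix (Fin 2) (Fin 2) K, IsUnit M.det ∧
          f = bind₁ (fun j : Fin 2 => C (M j 0) * X 0 + C (M j 1) * X 1)
            (X 0 ^ 8 + C (a4gen (shJ2 f) (shJ3 f) (shJ4 f) (shJ5 f)) * X 0 ^ 4 * X 1 ^ 4 +
              C (a0of (shJ2 f) (a4gen (shJ2 f) (shJ3 f) (shJ4 f) (shJ5 f))) * X 1 ^ 8)) ∧
      (30 * shJ3 f ^ 2 = shJ2 f ^ 3 → shJ4 f ≠ 0 →
        ∃ M : Matrix (Fin 2) (Fin 2) K, IsUnit M.det ∧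
          f = bind₁ (fun j : Fin 2 => C (M j 0) * X 0 + C (M j 1) * X 1)
            (X 0 ^ 8 + C (a4spec (shJ4 f) (shJ5 f)) * X 0 ^ 4 * X 1 ^ 4 +
              C (a0of (shJ2 f) (a4spec (shJ4 f) (shJ5 f))) * X 1 ^ 8))) := by
  have H := BinaryOctic.charGtSeven_of_ringChar hchar
  have hconv : BinaryOctic.SatisfiesD8Relations f → ∃ a, BinaryOctic.GLEquiv f
      (BinaryOctic.d8Octic a 1) :=
    BinaryOctic.exists_glEquiv_d8Octic_of_satisfiesD8Relations H hf hsf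
  simp only [← BinaryOctic.d8Octic_one]
  refine ⟨⟨fun ⟨a, h⟩ => BinaryOctic.satisfiesD8Relations_of_glEquiv H h, hconv⟩, fun hrel => ?_⟩
  obtain ⟨a, ha⟩ := hconv hrel
  exact ⟨BinaryOctic.glEquiv_d8Octic_a4gen H ha, fun _ => BinaryOctic.glEquiv_d8Octic_a4spec H ha⟩
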